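/- arXiv:1407.4228 — 2 statements merged into one kernel-verified Lean document; each statement's English description precedes it below -/
import Mathlib

section
/- Let λ, μ ∈ Λ_Δ(n,r), let y, d ∈ D^Δ_{λ,μ} with y ≤ d in the Bruhat order and y ≠ d, and set B = J_Δ(λ,y,μ) and A = J_Δ(λ,d,μ). Then B ⊏ A; that is, B ⊑ A and B ≠ A. -/
open scoped Classical

noncomputable section

/-- The extended affine symmetric group `𝔖_{Δ,r}`: permutations `w` of `ℤ`
with `w (i + r) = w i + r` for all `i`. -/
def AffSym (r : ℕ) : Subgroup (Equiv.Perm ℤ) where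
  carrier := {w | ∀ i : ℤ, w (i + r) = w i + r}
  one_mem' := fun _ => rfl
  mul_mem' := by
    intro a b ha hb i
    simp only [Equiv.Perm.mul_apply, hb i, ha (b i)]
  inv_mem' := by
    intro a ha i
    apply a.injective
    rw [ha (a⁻¹ i)]
    simp

/-- The underlying function of the affine transposition `(i,j)`. -/
def tFun (r : ℕ) (i j : ℤ) : ℤ → ℤ := fun k =>
  if (r : ℤ) ∣ (k - i) then j + (k - i)
  else if (r : ℤ) ∣ (k - j) then i + (k - j)
  else k

theorem tFun_invol (r : ℕ) (i j : ℤ) (h : ¬ (r : ℤ) ∣ (j - i)) :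
    Function.Involutive (tFun r i j) := by
  intro k
  by_cases h1 : (r : ℤ) ∣ (k - i)
  · have e1 : tFun r i j k = j + (k - i) := by simp only [tFun]; rw [if_pos h1]
    have h2 : ¬ (r : ℤ) ∣ (j + (k - i) - i) := by
      intro hd
      apply h
      have h5 := hd.sub h1
      have h6 : j + (k - i) - i - (k - i) = j - i := by ring
      rwa [h6] at h5
    have h3 : (r : ℤ) ∣ (j + (k - i) - j) := by simpa using h1
    rw [e1]; simp only [tFun]; rw [if_neg h2, if_pos h3]; ring
  · by_cases h2 : (r : ℤ) ∣ (k - j)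
    · have e1 : tFun r i j k = i + (k - j) := by
        simp only [tFun]; rw [if_neg h1, if_pos h2]
      have h3 : (r : ℤ) ∣ (i + (k - j) - i) := by simpa using h2
      rw [e1]; simp only [tFun]; rw [if_pos h3]; ring
    · have e1 : tFun r i j k = k := by simp only [tFun]; rw [if_neg h1, if_neg h2]
      rw [e1, e1]

/-- The affine transposition `(i,j) ∈ W_r` (defined to be `1` in the degenerate
case `i ≡ j (mod r)`). -/
def tPerm (r : ℕ) (i j : ℤ) : Equiv.Perm ℤ :=
  if h : (r : ℤ) ∣ (j - i) then 1 else Function.Involutive.toPerm _ (tFun_invol r i j h)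

/-- The set of Coxeter generators `s_1, …, s_r` of `W_r`. -/
def sGen (r : ℕ) : Set (Equiv.Perm ℤ) :=
  {w | ∃ i : ℤ, 1 ≤ i ∧ i ≤ (r : ℤ) ∧ w = tPerm r i (i + 1)}

/-- The affine Weyl group `W_r`, generated by `s_1, …, s_r`. -/
def WGrp (r : ℕ) : Subgroup (Equiv.Perm ℤ) := Subgroup.closure (sGen r)

/-- Length of an element of `W_r`: the minimal length of an expression
as a product of the generators `s_1, …, s_r`. -/
def lenW (r : ℕ) (x : Equiv.Perm ℤ) : ℕ :=
  sInf {m | ∃ l : List (Equiv.Perm ℤ), l.length = m ∧ (∀ s ∈ l, s ∈ sGen r) ∧ l.prod = x}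

/-- The shift permutation `ρ : j ↦ j + 1`. -/
def rhoP : Equiv.Perm ℤ := Equiv.addRight 1

/-- For `w = ρ^a x` with `x ∈ W_r`, recovers the exponent `a`. -/
def shiftIdx (r : ℕ) (w : Equiv.Perm ℤ) : ℤ :=
  (∑ i ∈ Finset.Icc (1 : ℤ) (r : ℤ), (w i - i)) / r

/-- Length on `𝔖_{Δ,r}`: writing `w = ρ^a x` with `x ∈ W_r`, `ℓ(w) = ℓ(x)`. -/
def alen (r : ℕ) (w : Equiv.Perm ℤ) : ℕ :=
  lenW r ((rhoP ^ shiftIdx r w)⁻¹ * w)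

/-- The set `T` of affine reflections `(i,j)`, `i < j`, `i ≢ j (mod r)`. -/
def TSet (r : ℕ) : Set (Equiv.Perm ℤ) :=
  {t | ∃ i j : ℤ, i < j ∧ ¬ (r : ℤ) ∣ (j - i) ∧ t = tPerm r i j}

/-- Bruhat order on `W_r`: `y ≤ w` iff `w = t_1 ⋯ t_m y` with all `t_i ∈ T` and
`ℓ(t_i ⋯ t_m y) > ℓ(t_{i+1} ⋯ t_m y)` for all `i`. -/
def bruhatLE (r : ℕ) (y w : Equiv.Perm ℤ) : Prop :=
  ∃ l : List (Equiv.Perm ℤ), (∀ t ∈ l, t ∈ TSet r) ∧ w = l.prod * y ∧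
    ∀ k, k < l.length →
      lenW r ((l.drop (k + 1)).prod * y) < lenW r ((l.drop k).prod * y)

/-- Bruhat order extended to `𝔖_{Δ,r}`: `ρ^a y ≤ ρ^b w` iff `a = b` and `y ≤ w`. -/
def abruhatLE (r : ℕ) (y w : Equiv.Perm ℤ) : Prop :=
  shiftIdx r y = shiftIdx r w ∧
    bruhatLE r ((rhoP ^ shiftIdx r y)⁻¹ * y) ((rhoP ^ shiftIdx r w)⁻¹ * w)

/-- `Λ_Δ(n,r)`: `n`-periodic sequences of naturals summing to `r` over a period. -/
def LambdaSet (n r : ℕ) : Set (ℤ → ℕ) :=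
  {lam | (∀ i : ℤ, lam i = lam (i - n)) ∧ ∑ i ∈ Finset.Icc (1 : ℤ) (n : ℤ), lam i = r}

/-- The interval `R^λ_m ⊆ ℤ`; for `m = i + kn` with `1 ≤ i ≤ n` this is
`{λ_{k,i-1}+1, …, λ_{k,i-1}+λ_i}` where `λ_{k,i-1} = kr + λ_1 + ⋯ + λ_{i-1}`. -/
def Rset (n r : ℕ) (lam : ℤ → ℕ) (m : ℤ) : Set ℤ :=
  {a | ((m - 1) / n) * r + ∑ t ∈ Finset.Icc (1 : ℤ) ((m - 1) % n), (lam t : ℤ) < a ∧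
       a ≤ ((m - 1) / n) * r + ∑ t ∈ Finset.Icc (1 : ℤ) ((m - 1) % n + 1), (lam t : ℤ)}

/-- The finite symmetric group `𝔖_r ⊆ W_r`, generated by `s_1, …, s_{r-1}`. -/
def SymFin (r : ℕ) : Subgroup (Equiv.Perm ℤ) :=
  Subgroup.closure {w | ∃ i : ℤ, 1 ≤ i ∧ i < (r : ℤ) ∧ w = tPerm r i (i + 1)}

/-- The Young subgroup `𝔖_λ`: elements of `𝔖_r` stabilizing each `R^λ_i`, `1 ≤ i ≤ n`. -/
def YoungSet (n r : ℕ) (lam : ℤ → ℕ) : Set (Equiv.Perm ℤ) :=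
  {w | w ∈ SymFin r ∧ ∀ i : ℤ, 1 ≤ i → i ≤ (n : ℤ) → w '' Rset n r lam i = Rset n r lam i}

/-- `D^Δ_λ`: distinguished right coset representatives. -/
def DRep (n r : ℕ) (lam : ℤ → ℕ) : Set (Equiv.Perm ℤ) :=
  {d | d ∈ AffSym r ∧ ∀ w ∈ YoungSet n r lam, alen r (w * d) = alen r w + alen r d}

/-- `D^Δ_{λ,μ} = D^Δ_λ ∩ (D^Δ_μ)⁻¹`. -/
def DRep2 (n r : ℕ) (lam mu : ℤ → ℕ) : Set (Equiv.Perm ℤ) :=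
  {d | d ∈ DRep n r lam ∧ d⁻¹ ∈ DRep n r mu}

/-- The matrix `J_Δ(λ,d,μ) = (|R^λ_k ∩ d(R^μ_l)|)_{k,l}`. -/
def JMat (n r : ℕ) (lam mu : ℤ → ℕ) (d : Equiv.Perm ℤ) : ℤ → ℤ → ℕ :=
  fun k l => (Rset n r lam k ∩ (d '' Rset n r mu l)).ncard

/-- `Θ_Δ(n)`: ℕ-matrices, `n`-periodic along the diagonal, with finite rows and columns. -/
def ThetaSet (n : ℕ) : Set (ℤ → ℤ → ℕ) :=
  {A | (∀ i j : ℤ, A (i + n) (j + n) = A i j) ∧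
       (∀ i : ℤ, {j : ℤ | A i j ≠ 0}.Finite) ∧
       (∀ j : ℤ, {i : ℤ | A i j ≠ 0}.Finite)}

/-- `σ(A) = Σ_{1 ≤ i ≤ n, j ∈ ℤ} a_{i,j}`. -/
def sigmaTot (n : ℕ) (A : ℤ → ℤ → ℕ) : ℕ :=
  ∑ᶠ j : ℤ, ∑ i ∈ Finset.Icc (1 : ℤ) (n : ℤ), A i j

/-- Row sums. -/
def roM (A : ℤ → ℤ → ℕ) : ℤ → ℕ := fun i => ∑ᶠ j : ℤ, A i j

/-- Column sums. -/
def coM (A : ℤ → ℤ → ℕ) : ℤ → ℕ := fun j => ∑ᶠ i : ℤ, A i j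

/-- `σ_{i,j}(A)`: for `i < j` the sum `Σ_{s ≤ i, t ≥ j} a_{s,t}`; for `i > j` the
sum `Σ_{s ≥ i, t ≤ j} a_{s,t}`. -/
def sigmaOrd (A : ℤ → ℤ → ℕ) (i j : ℤ) : ℕ :=
  if i < j then ∑ᶠ (p : ℤ × ℤ) (_ : p.1 ≤ i ∧ j ≤ p.2), A p.1 p.2
  else ∑ᶠ (p : ℤ × ℤ) (_ : i ≤ p.1 ∧ p.2 ≤ j), A p.1 p.2

/-- The map `η_m : A ↦ (a_{i, mn+j})_{i,j}`. -/
def etaM (n : ℕ) (m : ℤ) (A : ℤ → ℤ → ℕ) : ℤ → ℤ → ℕ := fun i j => A i (m * n + j)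

/-- The double coset `𝔖_λ d 𝔖_μ`. -/
def DCoset (n r : ℕ) (lam mu : ℤ → ℕ) (d : Equiv.Perm ℤ) : Set (Equiv.Perm ℤ) :=
  {w | ∃ u ∈ YoungSet n r lam, ∃ v ∈ YoungSet n r mu, w = u * d * v}

/-- `d_A = Σ a_{i,j} a_{k,l}` over `1 ≤ i ≤ n`, `k ≤ i`, `j < l`. -/
def dWt (n : ℕ) (A : ℤ → ℤ → ℕ) : ℕ :=
  ∑ᶠ (q : (ℤ × ℤ) × ℤ × ℤ)
    (_ : 1 ≤ q.1.1 ∧ q.1.1 ≤ (n : ℤ) ∧ q.2.1 ≤ q.1.1 ∧ q.1.2 < q.2.2),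
    A q.1.1 q.1.2 * A q.2.1 q.2.2

/-- The embedding `A ↦ Ã` from `Θ_Δ(n)` to `Θ_Δ(N)`. -/
def tildeM (n N : ℕ) (A : ℤ → ℤ → ℕ) : ℤ → ℤ → ℕ := fun k l =>
  let k0 : ℤ := (k - 1) % N + 1
  let l' : ℤ := l - ((k - 1) / N) * N
  let l0 : ℤ := (l' - 1) % N + 1
  let m : ℤ := (l' - 1) / N
  if k0 ≤ n ∧ l0 ≤ n then A k0 (l0 + m * n) else 0

/-- `Θ̃_Δ(n)`: ℤ-matrices with nonnegative off-diagonal entries, `n`-periodic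
along the diagonal, with finite rows and columns. -/
def ThetaTSet (n : ℕ) : Set (ℤ → ℤ → ℤ) :=
  {A | (∀ i j : ℤ, i ≠ j → 0 ≤ A i j) ∧ (∀ i j : ℤ, A (i + n) (j + n) = A i j) ∧
       (∀ i : ℤ, {j : ℤ | A i j ≠ 0}.Finite) ∧ (∀ j : ℤ, {i : ℤ | A i j ≠ 0}.Finite)}

/-- Row sums (ℤ-entry version). -/
def roMZ (A : ℤ → ℤ → ℤ) : ℤ → ℤ := fun i => ∑ᶠ j : ℤ, A i j

/-- Column sums (ℤ-entry version). -/
def coMZ (A : ℤ → ℤ → ℤ) : ℤ → ℤ := fun j => ∑ᶠ i : ℤ, A i j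

/-- `σ_{i,j}` (ℤ-entry version). -/
def sigmaOrdZ (A : ℤ → ℤ → ℤ) (i j : ℤ) : ℤ :=
  if i < j then ∑ᶠ (p : ℤ × ℤ) (_ : p.1 ≤ i ∧ j ≤ p.2), A p.1 p.2
  else ∑ᶠ (p : ℤ × ℤ) (_ : i ≤ p.1 ∧ p.2 ≤ j), A p.1 p.2

/-- The relation `B ⊑ A` on `Θ̃_Δ(n)`. -/
def sqLE (B A : ℤ → ℤ → ℤ) : Prop :=
  (∀ i j : ℤ, i ≠ j → sigmaOrdZ B i j ≤ sigmaOrdZ A i j) ∧ roMZ B = roMZ A ∧ coMZ B = coMZ A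

/-- The vector `v_a ∈ V = 𝔽[ε,ε⁻¹]^r`: for `a = i + kr` with `1 ≤ i ≤ r`,
`v_a = ε^{-k} v_i` where `v_1, …, v_r` is the standard basis. -/
def vb (F : Type*) [Field F] (r : ℕ) (a : ℤ) : Fin r → LaurentPolynomial F :=
  if h : 0 < r then
    Pi.single ⟨((a - 1) % (r : ℤ)).toNat, by
      have h1 : (0 : ℤ) < (r : ℤ) := by exact_mod_cast h
      have h2 : 0 ≤ (a - 1) % (r : ℤ) := Int.emod_nonneg _ (by omega)
      have h3 : (a - 1) % (r : ℤ) < (r : ℤ) := Int.emod_lt_of_pos _ h1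
      omega⟩
      (LaurentPolynomial.T (-((a - 1) / (r : ℤ))))
  else 0

/-- The bound `Σ_{1 ≤ j ≤ i} λ_j + kr` for `m = i + kn`, `1 ≤ i ≤ n`. -/
def bnd (n r : ℕ) (lam : ℤ → ℕ) (m : ℤ) : ℤ :=
  ((m - 1) / n) * r + ∑ t ∈ Finset.Icc (1 : ℤ) ((m - 1) % n + 1), (lam t : ℤ)

/-- The lattice-filtration subspace `L_m = span_𝔽{v_a | a ≤ Σ_{1≤j≤i} λ_j + kr}`. -/
def Lsub (F : Type*) [Field F] (n r : ℕ) (lam : ℤ → ℕ) (m : ℤ) :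
    Submodule F (Fin r → LaurentPolynomial F) :=
  Submodule.span F {x | ∃ a : ℤ, a ≤ bnd n r lam m ∧ x = vb F r a}

/-- The subspace `L'_m = span_𝔽{v_{d(a)} | a ≤ Σ_{1≤j≤i} μ_j + kr}`. -/
def Lsub' (F : Type*) [Field F] (n r : ℕ) (mu : ℤ → ℕ) (d : Equiv.Perm ℤ) (m : ℤ) :
    Submodule F (Fin r → LaurentPolynomial F) :=
  Submodule.span F {x | ∃ a : ℤ, a ≤ bnd n r mu m ∧ x = vb F r (d a)}
end

/-!
In `W_r` the strong exchange property turns the length condition `ℓ(x) < ℓ((i,j) x)` into the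
inversion condition `x⁻¹ i < x⁻¹ j`, so `y ≤ d` is a chain of steps `x ↦ (i,j) x` that move the
larger values of `ℤ` to earlier positions. The corner sum `σ_{i,j}` of `J_Δ(λ,d,μ)` with `i < j`
counts the integers `b ≤ P` with `d⁻¹ b > Q` for two block boundaries `P` and `Q`, and such a count
can only grow along a step. The sums with `i > j` follow by transposition, since
`J_Δ(μ,d⁻¹,λ)` is the transpose of `J_Δ(λ,d,μ)` and steps are compatible with inversion. The row and
column sums are the block sizes.

For `B ≠ A`, distinguished representatives are increasing on the blocks of `μ`, and their inverses
on the blocks of `λ`. Column `l` of `J_Δ(λ,d,μ)` therefore determines which `λ`-block contains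
`d a` for each `a` in the `l`-th `μ`-block. Together the columns determine each set `d⁻¹(R^λ_k)`,
and `d⁻¹` is the only increasing enumeration of this set by `R^λ_k`.
-/

section Counting

variable {α ι : Type*}

theorem finsum_mem_ncard_inter_preimage_singleton (F : α → ι) (U : Set α) (P : Set ι)
    (hfin : (U ∩ F ⁻¹' P).Finite) :
    ∑ᶠ (p : ι) (_ : p ∈ P), (U ∩ F ⁻¹' {p}).ncard = (U ∩ F ⁻¹' P).ncard := by
  have hfiber : ∀ p ∈ P,
      (U ∩ F ⁻¹' {p}).ncard = (hfin.toFinset.filter fun a => F a = p).card := by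
    rintro p hp
    rw [← Set.ncard_coe_finset]
    congr 1
    ext a
    simp only [Set.mem_inter_iff, Set.mem_preimage, Set.mem_singleton_iff, Finset.coe_filter,
      Set.Finite.mem_toFinset, Set.mem_ofPred_eq]
    exact ⟨fun ⟨hU, hF⟩ => ⟨⟨hU, hF ▸ hp⟩, hF⟩, fun ⟨⟨hU, _⟩, hF⟩ => ⟨hU, hF⟩⟩
  rw [finsum_mem_congr rfl hfiber, Set.ncard_eq_toFinset_card _ hfin,
    Finset.card_eq_sum_card_image F, ← finsum_mem_coe_finset]
  refine finsum_mem_inter_support_eq' _ _ _ fun p hp => ?_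
  obtain ⟨a, ha⟩ := Finset.card_ne_zero.1 (Function.mem_support.1 hp)
  obtain ⟨haU, rfl⟩ := Finset.mem_filter.1 ha
  exact ⟨fun _ => Finset.mem_image_of_mem F haU, fun _ => (hfin.mem_toFinset.1 haU).2⟩

theorem eqOn_of_monotoneOn_of_ncard_fiber_eq [LinearOrder α] [LinearOrder ι] {s : Set α}
    (hs : s.Finite) {f g : α → ι} (hf : MonotoneOn f s) (hg : MonotoneOn g s)
    (hfib : ∀ v, (s ∩ f ⁻¹' {v}).ncard = (s ∩ g ⁻¹' {v}).ncard) : Set.EqOn f g s := by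
  have hIic : ∀ v, (s ∩ f ⁻¹' Set.Iic v).ncard = (s ∩ g ⁻¹' Set.Iic v).ncard := fun v => by
    rw [← finsum_mem_ncard_inter_preimage_singleton f s _ (hs.inter_of_left _),
      ← finsum_mem_ncard_inter_preimage_singleton g s _ (hs.inter_of_left _),
      finsum_mem_congr rfl fun v _ => hfib v]
  suffices hle : ∀ {f g : α → ι}, MonotoneOn f s → MonotoneOn g s →
      (∀ v, (s ∩ f ⁻¹' Set.Iic v).ncard = (s ∩ g ⁻¹' Set.Iic v).ncard) → ∀ a ∈ s, g a ≤ f a from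
    fun a ha => (hle hg hf (fun v => (hIic v).symm) a ha).antisymm (hle hf hg hIic a ha)
  intro f g hf hg hcount a ha
  by_contra! hlt
  have hssub : s ∩ g ⁻¹' Set.Iic (f a) ⊂ s ∩ f ⁻¹' Set.Iic (f a) := by
    refine (Set.ssubset_iff_of_subset ?_).2 ⟨a, ⟨ha, le_rfl⟩, fun h => hlt.not_ge h.2⟩
    rintro b ⟨hb, hgb⟩
    have hba : b ≤ a := (hg.reflect_lt hb ha (lt_of_le_of_lt hgb hlt)).le
    exact ⟨hb, hf hb ha hba⟩
  exact (Set.ncard_lt_ncard hssub (hs.inter_of_left _)).ne (hcount _).symm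

theorem eqOn_of_strictMonoOn_of_image_eq [LinearOrder α] [Preorder ι] {s : Set α}
    (hs : s.Finite) {f g : α → ι} (hf : StrictMonoOn f s) (hg : StrictMonoOn g s)
    (himage : f '' s = g '' s) : Set.EqOn f g s := by
  have : Finite s := hs
  rw [← Set.range_domRestrict, ← Set.range_domRestrict,
    StrictMono.range_inj hf.domRestrict hg.domRestrict] at himage
  exact Set.domRestrict_eq_domRestrict_iff.1 himage

theorem ncard_inter_le_ncard_inter_image {t : Equiv.Perm α} (ht : Function.Involutive t)
    {S T : Set α} (hfin : (S ∩ t '' T).Finite) (hST : ∀ b ∈ S ∩ T, t b ∉ T → t b ∈ S) :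
    (S ∩ T).ncard ≤ (S ∩ t '' T).ncard := by
  have himage : t '' T = t ⁻¹' T := ht.image_eq_preimage_symm ▸ rfl
  rw [himage] at hfin ⊢
  refine Set.ncard_le_ncard_of_injOn (fun b => if t b ∈ T then b else t b) ?_ ?_ hfin
  · rintro b ⟨hS, hT⟩
    split_ifs with hb
    · exact ⟨hS, hb⟩
    · exact ⟨hST b ⟨hS, hT⟩ hb, by simpa [ht b] using hT⟩
  · rintro a ⟨-, haT⟩ b ⟨-, hbT⟩ hab
    dsimp only at hab
    split_ifs at hab with ha hb hb
    · exact hab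
    · exact absurd (hab ▸ haT) hb
    · exact absurd (hab.symm ▸ hbT) ha
    · exact t.injective hab

end Counting

section AffineSymmetricGroup

namespace AffSym

variable {r : ℕ} {w : Equiv.Perm ℤ}

theorem periodic_apply_sub (hw : w ∈ AffSym r) : Function.Periodic (fun k => w k - k) (r : ℤ) :=
  fun k => by simp only [hw k, add_sub_add_right_eq_sub]

theorem apply_eq_add_of_dvd (hw : w ∈ AffSym r) {i k : ℤ} (h : (r : ℤ) ∣ k - i) :
    w k = w i + (k - i) := by
  obtain ⟨c, hc⟩ := h
  have hper := (periodic_apply_sub hw).int_mul c i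
  rw [Int.cast_id, mul_comm, ← hc, add_sub_cancel] at hper
  omega

theorem dvd_apply_sub_apply_iff (hw : w ∈ AffSym r) {i k : ℤ} :
    (r : ℤ) ∣ w k - w i ↔ (r : ℤ) ∣ k - i := by
  refine ⟨fun h => ?_, fun h => by rwa [apply_eq_add_of_dvd hw h, add_sub_cancel_left]⟩
  have hinv := apply_eq_add_of_dvd (inv_mem hw) h
  simp only [Equiv.Perm.coe_inv, Equiv.symm_apply_apply] at hinv
  rwa [hinv, add_sub_cancel_left]

theorem finite_range_apply_sub (hr : 0 < r) (hw : w ∈ AffSym r) :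
    (Set.range fun k => w k - k).Finite := by
  rw [← (periodic_apply_sub hw).image_Ioc (by exact_mod_cast hr) 0]
  exact (Set.finite_Ioc _ _).image _

theorem finite_Iic_inter_image_Ioi (hr : 0 < r) (hw : w ∈ AffSym r) (P Q : ℤ) :
    (Set.Iic P ∩ w '' Set.Ioi Q).Finite := by
  obtain ⟨m, hm⟩ := (finite_range_apply_sub hr hw).bddBelow
  refine (Set.finite_Icc (Q + m) P).subset ?_
  rintro _ ⟨hP, a, ha : Q < a, rfl⟩
  have hdisp : m ≤ w a - a := hm ⟨a, rfl⟩
  exact ⟨by linarith, hP⟩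

end AffSym

theorem addRight_mem_AffSym (r : ℕ) (a : ℤ) : Equiv.addRight a ∈ AffSym r :=
  fun i => add_right_comm i (r : ℤ) a

theorem rhoP_zpow (a : ℤ) : rhoP ^ a = Equiv.addRight a := by
  ext b
  induction a using Int.induction_on generalizing b with
  | zero => exact (add_zero b).symm
  | succ k ih =>
    rw [zpow_add_one, Equiv.Perm.mul_apply, ih]
    change b + 1 + (k : ℤ) = b + (k + 1)
    ring
  | pred k ih =>
    rw [zpow_sub_one, Equiv.Perm.mul_apply, ih]
    change b - 1 + -(k : ℤ) = b + (-k - 1)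
    ring

theorem rhoP_zpow_mem_AffSym (r : ℕ) (a : ℤ) : rhoP ^ a ∈ AffSym r :=
  rhoP_zpow a ▸ addRight_mem_AffSym r a

variable {r : ℕ} {i j k : ℤ}

theorem tPerm_of_dvd (h : (r : ℤ) ∣ j - i) : tPerm r i j = 1 := dif_pos h

theorem tPerm_apply_of_dvd_sub_left (hij : ¬(r : ℤ) ∣ j - i) (hk : (r : ℤ) ∣ k - i) :
    tPerm r i j k = k + (j - i) := by
  simp only [tPerm, dif_neg hij, Function.Involutive.coe_toPerm, tFun, if_pos hk]
  ring

theorem tPerm_apply_of_dvd_sub_right (hij : ¬(r : ℤ) ∣ j - i) (hk : (r : ℤ) ∣ k - j) :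
    tPerm r i j k = k - (j - i) := by
  have hki : ¬(r : ℤ) ∣ k - i := fun h => hij (by simpa using h.sub hk)
  simp only [tPerm, dif_neg hij, Function.Involutive.coe_toPerm, tFun, if_neg hki, if_pos hk]
  ring

theorem tPerm_apply_of_not_dvd (hi : ¬(r : ℤ) ∣ k - i) (hj : ¬(r : ℤ) ∣ k - j) :
    tPerm r i j k = k := by
  unfold tPerm
  split_ifs
  · rfl
  · simp only [Function.Involutive.coe_toPerm, tFun, if_neg hi, if_neg hj]

theorem tPerm_apply_left (hij : ¬(r : ℤ) ∣ j - i) : tPerm r i j i = j := by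
  rw [tPerm_apply_of_dvd_sub_left hij (by simp), add_sub_cancel]

theorem tPerm_apply_eq_or (r : ℕ) (i j k : ℤ) :
    tPerm r i j k = k ∨ (r : ℤ) ∣ k - i ∧ tPerm r i j k = k + (j - i) ∨
      (r : ℤ) ∣ k - j ∧ tPerm r i j k = k - (j - i) := by
  by_cases hij : (r : ℤ) ∣ j - i
  · exact .inl (by rw [tPerm_of_dvd hij]; rfl)
  by_cases hi : (r : ℤ) ∣ k - i
  · exact .inr (.inl ⟨hi, tPerm_apply_of_dvd_sub_left hij hi⟩)
  by_cases hj : (r : ℤ) ∣ k - j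
  · exact .inr (.inr ⟨hj, tPerm_apply_of_dvd_sub_right hij hj⟩)
  · exact .inl (tPerm_apply_of_not_dvd hi hj)

theorem tPerm_mem_AffSym (r : ℕ) (i j : ℤ) : tPerm r i j ∈ AffSym r := by
  by_cases hij : (r : ℤ) ∣ j - i
  · exact tPerm_of_dvd hij ▸ one_mem _
  intro k
  have hdvd (a : ℤ) : (r : ℤ) ∣ k + r - a ↔ (r : ℤ) ∣ k - a := by
    rw [add_sub_right_comm, dvd_add_self_right]
  simp only [tPerm, dif_neg hij, Function.Involutive.coe_toPerm, tFun, hdvd]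
  split_ifs <;> ring

theorem tPerm_involutive (r : ℕ) (i j : ℤ) : Function.Involutive (tPerm r i j) := by
  by_cases hij : (r : ℤ) ∣ j - i
  · exact fun _ => by rw [tPerm_of_dvd hij]; rfl
  · rw [tPerm, dif_neg hij]
    exact tFun_invol r i j hij

theorem tPerm_mul_self (r : ℕ) (i j : ℤ) : tPerm r i j * tPerm r i j = 1 :=
  Equiv.ext (tPerm_involutive r i j)

theorem tPerm_inv (r : ℕ) (i j : ℤ) : (tPerm r i j)⁻¹ = tPerm r i j :=
  inv_eq_of_mul_eq_one_left (tPerm_mul_self r i j)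

theorem tPerm_mul_tPerm_mul (r : ℕ) (i j : ℤ) (x : Equiv.Perm ℤ) :
    tPerm r i j * (tPerm r i j * x) = x := by
  rw [← mul_assoc, tPerm_mul_self, one_mul]

theorem mul_tPerm_eq {w : Equiv.Perm ℤ} (hw : w ∈ AffSym r) (i j : ℤ) :
    w * tPerm r i j = tPerm r (w i) (w j) * w := by
  by_cases hij : (r : ℤ) ∣ j - i
  · rw [tPerm_of_dvd hij, tPerm_of_dvd ((AffSym.dvd_apply_sub_apply_iff hw).2 hij), one_mul,
      mul_one]
  have hij' := mt (AffSym.dvd_apply_sub_apply_iff hw).1 hij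
  ext k
  simp only [Equiv.Perm.mul_apply]
  by_cases hi : (r : ℤ) ∣ k - i
  · have hkj : (r : ℤ) ∣ k + (j - i) - j := by rwa [show k + (j - i) - j = k - i by ring]
    rw [tPerm_apply_of_dvd_sub_left hij hi,
      tPerm_apply_of_dvd_sub_left hij' ((AffSym.dvd_apply_sub_apply_iff hw).2 hi),
      AffSym.apply_eq_add_of_dvd hw hi, AffSym.apply_eq_add_of_dvd hw hkj]
    ring
  by_cases hj : (r : ℤ) ∣ k - j
  · have hki : (r : ℤ) ∣ k - (j - i) - i := by rwa [show k - (j - i) - i = k - j by ring]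
    rw [tPerm_apply_of_dvd_sub_right hij hj,
      tPerm_apply_of_dvd_sub_right hij' ((AffSym.dvd_apply_sub_apply_iff hw).2 hj),
      AffSym.apply_eq_add_of_dvd hw hj, AffSym.apply_eq_add_of_dvd hw hki]
    ring
  · rw [tPerm_apply_of_not_dvd hi hj,
      tPerm_apply_of_not_dvd (mt (AffSym.dvd_apply_sub_apply_iff hw).1 hi)
        (mt (AffSym.dvd_apply_sub_apply_iff hw).1 hj)]

theorem tPerm_add_of_dvd {c : ℤ} (hc : (r : ℤ) ∣ c) (i j : ℤ) :
    tPerm r (i + c) (j + c) = tPerm r i j := by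
  have hconj := mul_tPerm_eq (addRight_mem_AffSym r c) i j
  have hcomm : Equiv.addRight c * tPerm r i j = tPerm r i j * Equiv.addRight c := by
    ext k
    have hk := AffSym.apply_eq_add_of_dvd (tPerm_mem_AffSym r i j) (i := k) (k := k + c)
      (by rwa [add_sub_cancel_left])
    simpa using hk.symm
  exact (mul_right_cancel (hcomm.symm.trans hconj)).symm

theorem tPerm_adj_eq_of_apply_lt_apply {p : ℤ} (hij : i < j)
    (hflip : tPerm r p (p + 1) j < tPerm r p (p + 1) i) :
    tPerm r i j = tPerm r p (p + 1) := by
  have hi := tPerm_apply_eq_or r p (p + 1) i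
  have hj := tPerm_apply_eq_or r p (p + 1) j
  obtain ⟨hdvd, rfl⟩ : (r : ℤ) ∣ i - p ∧ j = i + 1 := by
    rcases hi with hi | ⟨hdvd, hi⟩ | ⟨-, hi⟩ <;> rcases hj with hj | ⟨-, hj⟩ | ⟨-, hj⟩ <;>
      first | omega | exact ⟨hdvd, by omega⟩
  have htrans := tPerm_add_of_dvd hdvd p (p + 1)
  rwa [add_sub_cancel, show p + 1 + (i - p) = i + 1 by ring] at htrans

theorem tPerm_adj_mem_sGen (hr : 0 < r) (p : ℤ) : tPerm r p (p + 1) ∈ sGen r := by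
  have hr' : (0 : ℤ) < r := by exact_mod_cast hr
  have htrans := tPerm_add_of_dvd (dvd_mul_right (r : ℤ) ((p - 1) / r))
    ((p - 1) % r + 1) ((p - 1) % r + 1 + 1)
  have hp := Int.emod_add_mul_ediv (p - 1) r
  refine ⟨(p - 1) % r + 1, ?_, ?_, ?_⟩
  · have := Int.emod_nonneg (p - 1) hr'.ne'
    omega
  · exact Int.emod_lt_of_pos _ hr'
  · rw [← htrans]
    congr 1 <;> linarith

end AffineSymmetricGroup

section Length

variable {r : ℕ} {i j : ℤ} {x : Equiv.Perm ℤ}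

theorem inv_sGen (r : ℕ) : (sGen r)⁻¹ = sGen r := by
  have hsub : ∀ s ∈ sGen r, s⁻¹ ∈ sGen r := by
    rintro _ ⟨i, h1, hi, rfl⟩
    exact ⟨i, h1, hi, tPerm_inv r i (i + 1)⟩
  exact Set.Subset.antisymm (fun s hs => inv_inv s ▸ hsub _ hs) hsub

theorem lenW_prod_le {l : List (Equiv.Perm ℤ)} (hl : ∀ s ∈ l, s ∈ sGen r) :
    lenW r l.prod ≤ l.length :=
  Nat.sInf_le ⟨l, rfl, hl, rfl⟩

theorem exists_list_length_eq_lenW (hx : x ∈ WGrp r) :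
    ∃ l : List (Equiv.Perm ℤ), l.length = lenW r x ∧ (∀ s ∈ l, s ∈ sGen r) ∧ l.prod = x := by
  rw [WGrp, ← Subgroup.mem_toSubmonoid, Subgroup.closure_toSubmonoid, inv_sGen,
    Set.union_self] at hx
  obtain ⟨l, hl, hprod⟩ := Submonoid.exists_list_of_mem_closure hx
  exact Nat.sInf_mem (s := {m | ∃ l : List (Equiv.Perm ℤ),
    l.length = m ∧ (∀ s ∈ l, s ∈ sGen r) ∧ l.prod = x}) ⟨l.length, l, rfl, hl, hprod⟩

theorem mem_WGrp_of_lenW_pos (h : 0 < lenW r x) : x ∈ WGrp r := by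
  obtain ⟨_, l, -, hl, rfl⟩ := Nat.nonempty_of_pos_sInf h
  exact list_prod_mem fun s hs => Subgroup.subset_closure (hl s hs)

theorem lenW_pos (hx : x ∈ WGrp r) (hne : x ≠ 1) : 0 < lenW r x := by
  obtain ⟨l, hlen, -, hprod⟩ := exists_list_length_eq_lenW hx
  rw [← hlen, List.length_pos_iff]
  rintro rfl
  exact hne hprod.symm

theorem tPerm_mem_WGrp {i j : ℤ} (hr : 0 < r) (hij : i < j) : tPerm r i j ∈ WGrp r := by
  by_cases hd : (r : ℤ) ∣ j - i
  · exact tPerm_of_dvd hd ▸ one_mem _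
  obtain ⟨s, hs⟩ : ∃ s, s = tPerm r i (i + 1) := ⟨_, rfl⟩
  have hsW : s ∈ WGrp r := hs ▸ Subgroup.subset_closure (tPerm_adj_mem_sGen hr i)
  obtain rfl | hj : j = i + 1 ∨ i + 1 < j := by omega
  · exact hs ▸ hsW
  have hr1 : ¬(r : ℤ) ∣ i + 1 - i := by
    rw [add_sub_cancel_left]
    exact fun h => hd (h.trans (one_dvd _))
  have hsi : s i = i + 1 := hs ▸ tPerm_apply_left hr1
  have hsj : s i < s j ∧ s j ≤ j := by
    have hne : s i ≠ s j := s.injective.ne hij.ne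
    have hcases := tPerm_apply_eq_or r i (i + 1) j
    rw [← hs] at hcases
    rcases hcases with h | ⟨h, -⟩ | ⟨-, h⟩
    · omega
    · exact absurd h hd
    · omega
  have hconj : tPerm r i j = s * (tPerm r (s i) (s j) * s) := by
    rw [← mul_tPerm_eq (hs ▸ tPerm_mem_AffSym r i (i + 1)), hs, tPerm_mul_tPerm_mul]
  rw [hconj]
  exact mul_mem hsW (mul_mem (tPerm_mem_WGrp hr hsj.1) hsW)
termination_by (j - i).toNat
decreasing_by omega

/-- The strong exchange property of `W_r`. -/
theorem exists_tPerm_mul_prod_eq_prod_eraseIdx {l : List (Equiv.Perm ℤ)}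
    (hl : ∀ s ∈ l, s ∈ sGen r) (hij : i < j) (hinv : l.prod⁻¹ j < l.prod⁻¹ i) :
    ∃ k < l.length, tPerm r i j * l.prod = (l.eraseIdx k).prod := by
  induction l generalizing i j with
  | nil => exact absurd hinv hij.not_gt
  | cons s l ih =>
    obtain ⟨p, -, -, rfl⟩ := hl s List.mem_cons_self
    have hl' : ∀ s ∈ l, s ∈ sGen r := fun s hs => hl s (List.mem_cons_of_mem _ hs)
    rw [List.prod_cons]
    rw [List.prod_cons, mul_inv_rev, tPerm_inv] at hinv
    rcases (tPerm r p (p + 1)).injective.ne hij.ne |>.lt_or_gt with hlt | hgt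
    · obtain ⟨k, hk, hprod⟩ := ih hl' hlt hinv
      refine ⟨k + 1, Nat.succ_lt_succ hk, ?_⟩
      have hconj := mul_tPerm_eq (tPerm_mem_AffSym r p (p + 1))
        (tPerm r p (p + 1) i) (tPerm r p (p + 1) j)
      rw [tPerm_involutive r p (p + 1) i, tPerm_involutive r p (p + 1) j] at hconj
      rw [List.eraseIdx_cons_succ, List.prod_cons, ← hprod, ← mul_assoc, ← hconj, mul_assoc]
    · refine ⟨0, Nat.succ_pos _, ?_⟩
      rw [tPerm_adj_eq_of_apply_lt_apply hij hgt, tPerm_mul_tPerm_mul, List.eraseIdx_cons_zero]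

theorem lenW_tPerm_mul_lt (hx : x ∈ WGrp r) (hij : i < j) (hinv : x⁻¹ j < x⁻¹ i) :
    lenW r (tPerm r i j * x) < lenW r x := by
  obtain ⟨l, hlen, hl, rfl⟩ := exists_list_length_eq_lenW hx
  obtain ⟨k, hk, hprod⟩ := exists_tPerm_mul_prod_eq_prod_eraseIdx hl hij hinv
  calc
    lenW r (tPerm r i j * l.prod) = lenW r (l.eraseIdx k).prod := by rw [hprod]
    _ ≤ (l.eraseIdx k).length := lenW_prod_le fun s hs => hl s (List.mem_of_mem_eraseIdx hs)
    _ < l.length := by rw [List.length_eraseIdx_of_lt hk]; omega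
    _ = lenW r l.prod := hlen

theorem inv_apply_lt_inv_apply_of_lenW_lt (hr : 0 < r) (hij : i < j)
    (hlen : lenW r x < lenW r (tPerm r i j * x)) : x⁻¹ i < x⁻¹ j := by
  have hx : x ∈ WGrp r := (Subgroup.mul_mem_cancel_left _ (tPerm_mem_WGrp hr hij)).1
    (mem_WGrp_of_lenW_pos (Nat.zero_lt_of_lt hlen))
  refine (x⁻¹.injective.ne hij.ne).lt_or_gt.resolve_right fun hinv => ?_
  exact lt_asymm hlen (lenW_tPerm_mul_lt hx hij hinv)

end Length

section BruhatOrder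

variable {r : ℕ} {x y z d : Equiv.Perm ℤ}

theorem mul_inv_apply_apply {α : Type*} (w x : Equiv.Perm α) (a : α) :
    (w * x)⁻¹ (w a) = x⁻¹ a := by
  rw [mul_inv_rev, Equiv.Perm.mul_apply]
  exact congrArg _ (w.symm_apply_apply a)

theorem rhoP_zpow_strictMono (a : ℤ) : StrictMono (rhoP ^ a) := by
  rw [rhoP_zpow]
  exact fun _ _ h => Int.add_lt_add_right h a

/-- An elementary upward step of the Bruhat order, described by inversions instead of lengths:
`z = (i,j) x` where `i < j` occur in this order in the sequence of values of `x`.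
The degenerate `(i,j) = 1` is allowed, so that `ReflectionStep r` is reflexive. -/
def ReflectionStep (r : ℕ) (x z : Equiv.Perm ℤ) : Prop :=
  ∃ i j : ℤ, i < j ∧ x⁻¹ i < x⁻¹ j ∧ z = tPerm r i j * x

namespace ReflectionStep

theorem mem_AffSym (h : ReflectionStep r x z) (hx : x ∈ AffSym r) : z ∈ AffSym r := by
  obtain ⟨i, j, -, -, rfl⟩ := h
  exact mul_mem (tPerm_mem_AffSym r i j) hx

theorem rhoP_zpow_mul (h : ReflectionStep r x z) (a : ℤ) :
    ReflectionStep r (rhoP ^ a * x) (rhoP ^ a * z) := by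
  obtain ⟨i, j, hij, hinv, rfl⟩ := h
  refine ⟨(rhoP ^ a) i, (rhoP ^ a) j, rhoP_zpow_strictMono a hij, ?_, ?_⟩
  · rwa [mul_inv_apply_apply, mul_inv_apply_apply]
  · rw [← mul_assoc, mul_tPerm_eq (rhoP_zpow_mem_AffSym r a), mul_assoc]

theorem inv (h : ReflectionStep r x z) (hx : x ∈ AffSym r) : ReflectionStep r x⁻¹ z⁻¹ := by
  obtain ⟨i, j, hij, hinv, rfl⟩ := h
  refine ⟨x⁻¹ i, x⁻¹ j, hinv, ?_, ?_⟩
  · simpa using hij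
  · rw [mul_inv_rev, tPerm_inv, mul_tPerm_eq (inv_mem hx)]

theorem ncard_Iic_inter_image_Ioi_le (hr : 0 < r) (h : ReflectionStep r x z)
    (hx : x ∈ AffSym r) (P Q : ℤ) :
    (Set.Iic P ∩ x '' Set.Ioi Q).ncard ≤ (Set.Iic P ∩ z '' Set.Ioi Q).ncard := by
  have hfin := AffSym.finite_Iic_inter_image_Ioi hr (h.mem_AffSym hx) P Q
  obtain ⟨i, j, hij, hinv, rfl⟩ := h
  rw [Equiv.Perm.coe_mul, Set.image_comp] at hfin ⊢
  refine ncard_inter_le_ncard_inter_image (tPerm_involutive r i j) hfin ?_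
  rintro b ⟨hbP : b ≤ P, a, haQ : Q < a, rfl⟩ hout
  rcases tPerm_apply_eq_or r i j (x a) with heq | ⟨hdvd, heq⟩ | ⟨-, heq⟩
  · exact absurd ⟨a, haQ, heq.symm⟩ hout
  · have hdvd' : (r : ℤ) ∣ tPerm r i j (x a) - j := by
      rwa [heq, show x a + (j - i) - j = x a - i by ring]
    have hup : a < x⁻¹ (tPerm r i j (x a)) := by
      have hi := AffSym.apply_eq_add_of_dvd (inv_mem hx) hdvd
      rw [Equiv.Perm.coe_inv, Equiv.symm_apply_apply, ← Equiv.Perm.coe_inv] at hi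
      rw [AffSym.apply_eq_add_of_dvd (inv_mem hx) hdvd', heq]
      linarith
    exact absurd ⟨_, haQ.trans hup, x.apply_symm_apply _⟩ hout
  · exact heq.trans_le (by linarith)

end ReflectionStep

theorem reflTransGen_reflectionStep_of_bruhatLE (hr : 0 < r) (h : bruhatLE r y d) :
    Relation.ReflTransGen (ReflectionStep r) y d := by
  obtain ⟨l, hT, rfl, hlen⟩ := h
  induction l with
  | nil => exact .refl
  | cons t l ih =>
    obtain ⟨i, j, hij, -, rfl⟩ := hT t List.mem_cons_self
    have hlen0 := hlen 0 (Nat.succ_pos _)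
    rw [List.drop_one, List.tail_cons, List.drop_zero, List.prod_cons, mul_assoc] at hlen0
    have hy := ih (fun t ht => hT t (List.mem_cons_of_mem _ ht))
      fun k hk => hlen (k + 1) (Nat.succ_lt_succ hk)
    exact hy.tail ⟨i, j, hij, inv_apply_lt_inv_apply_of_lenW_lt hr hij hlen0,
      by rw [List.prod_cons, mul_assoc]⟩

theorem reflTransGen_reflectionStep_of_abruhatLE (hr : 0 < r) (h : abruhatLE r y d) :
    Relation.ReflTransGen (ReflectionStep r) y d := by
  obtain ⟨hshift, hle⟩ := h
  rw [← hshift] at hle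
  have hmul := (reflTransGen_reflectionStep_of_bruhatLE hr hle).lift (rhoP ^ shiftIdx r y * ·)
    fun _ _ hstep => hstep.rhoP_zpow_mul _
  simpa only [Function.onFun, mul_inv_cancel_left] using hmul

theorem reflTransGen_reflectionStep_inv (h : Relation.ReflTransGen (ReflectionStep r) y d)
    (hy : y ∈ AffSym r) : Relation.ReflTransGen (ReflectionStep r) y⁻¹ d⁻¹ := by
  induction h using Relation.ReflTransGen.head_induction_on with
  | refl => exact .refl
  | head hstep _ ih => exact (ih (hstep.mem_AffSym hy)).head (hstep.inv hy)

theorem ncard_Iic_inter_image_Ioi_le_of_reflTransGen (hr : 0 < r)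
    (h : Relation.ReflTransGen (ReflectionStep r) y d) (hy : y ∈ AffSym r) (P Q : ℤ) :
    (Set.Iic P ∩ y '' Set.Ioi Q).ncard ≤ (Set.Iic P ∩ d '' Set.Ioi Q).ncard := by
  induction h using Relation.ReflTransGen.head_induction_on with
  | refl => exact le_rfl
  | head hstep _ ih =>
    exact (hstep.ncard_Iic_inter_image_Ioi_le hr hy P Q).trans (ih (hstep.mem_AffSym hy))

end BruhatOrder

section ShiftIndex

variable {r : ℕ} {x y : Equiv.Perm ℤ} {i j : ℤ}

theorem eq_of_dvd_sub_of_mem_Icc {a b : ℤ} (ha : a ∈ Finset.Icc 1 (r : ℤ))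
    (hb : b ∈ Finset.Icc 1 (r : ℤ)) (hdvd : (r : ℤ) ∣ a - b) : a = b := by
  rw [Finset.mem_Icc] at ha hb
  have habs : |a - b| < r := abs_lt.2 ⟨by omega, by omega⟩
  exact sub_eq_zero.1 (Int.eq_zero_of_abs_lt_dvd hdvd habs)

theorem sum_Icc_comp_eq_of_periodic {M : Type*} [AddCommMonoid M] (hr : 0 < r)
    (hy : y ∈ AffSym r) {h : ℤ → M} (hper : Function.Periodic h (r : ℤ)) :
    ∑ i ∈ Finset.Icc (1 : ℤ) r, h (y i) = ∑ i ∈ Finset.Icc (1 : ℤ) r, h i := by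
  have hr' : (0 : ℤ) < r := by exact_mod_cast hr
  have hmaps : Set.MapsTo (fun i => toIocMod hr' 0 (y i)) (Finset.Icc (1 : ℤ) r)
      (Finset.Icc (1 : ℤ) r) := fun i _ => by
    have hmem := toIocMod_mem_Ioc hr' 0 (y i)
    rw [zero_add] at hmem
    exact Finset.mem_coe.2 (Finset.mem_Icc.2 hmem)
  have hinj : Set.InjOn (fun i => toIocMod hr' 0 (y i)) (Finset.Icc (1 : ℤ) r) := by
    intro a ha b hb hab
    obtain ⟨m, hm⟩ := (toIocMod_eq_toIocMod hr').1 hab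
    rw [zsmul_eq_mul, Int.cast_id, mul_comm] at hm
    exact (eq_of_dvd_sub_of_mem_Icc hb ha
      ((AffSym.dvd_apply_sub_apply_iff hy).1 ⟨m, hm⟩)).symm
  refine Finset.sum_nbij _ hmaps hinj (Finset.surjOn_of_injOn_of_card_le _ hmaps hinj le_rfl) ?_
  exact fun i _ => (hper.sub_zsmul_eq _).symm

theorem sum_Icc_mul_apply_sub (hr : 0 < r) (hx : x ∈ AffSym r) (hy : y ∈ AffSym r) :
    ∑ i ∈ Finset.Icc (1 : ℤ) r, ((x * y) i - i) =
      ∑ i ∈ Finset.Icc (1 : ℤ) r, (x i - i) + ∑ i ∈ Finset.Icc (1 : ℤ) r, (y i - i) := by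
  rw [← sum_Icc_comp_eq_of_periodic hr hy (AffSym.periodic_apply_sub hx),
    ← Finset.sum_add_distrib]
  simp only [Equiv.Perm.mul_apply, sub_add_sub_cancel]

theorem sum_Icc_tPerm_apply_sub (hr : 0 < r) (i j : ℤ) :
    ∑ k ∈ Finset.Icc (1 : ℤ) r, (tPerm r i j k - k) = 0 := by
  have h := sum_Icc_mul_apply_sub hr (tPerm_mem_AffSym r i j) (tPerm_mem_AffSym r i j)
  simp only [tPerm_mul_self, Equiv.Perm.coe_one, id_eq, sub_self, Finset.sum_const_zero] at h
  omega

theorem shiftIdx_tPerm_mul (hr : 0 < r) (hx : x ∈ AffSym r) (i j : ℤ) :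
    shiftIdx r (tPerm r i j * x) = shiftIdx r x := by
  rw [shiftIdx, sum_Icc_mul_apply_sub hr (tPerm_mem_AffSym r i j) hx,
    sum_Icc_tPerm_apply_sub hr, zero_add, shiftIdx]

theorem alen_tPerm_pos (hr : 0 < r) (hij : i < j) (hd : ¬(r : ℤ) ∣ j - i) :
    0 < alen r (tPerm r i j) := by
  rw [alen, shiftIdx, sum_Icc_tPerm_apply_sub hr, Int.zero_ediv, zpow_zero, inv_one, one_mul]
  refine lenW_pos (tPerm_mem_WGrp hr hij) fun h => hij.ne' ?_
  rw [← tPerm_apply_left hd, h, Equiv.Perm.coe_one, id_eq]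

theorem inv_apply_lt_inv_apply_of_alen_lt (hr : 0 < r) (hx : x ∈ AffSym r) (hij : i < j)
    (hlen : alen r x < alen r (tPerm r i j * x)) : x⁻¹ i < x⁻¹ j := by
  rw [alen, alen, shiftIdx_tPerm_mul hr hx, ← zpow_neg, ← mul_assoc,
    mul_tPerm_eq (rhoP_zpow_mem_AffSym r _), mul_assoc] at hlen
  have hinv := inv_apply_lt_inv_apply_of_lenW_lt hr (rhoP_zpow_strictMono _ hij) hlen
  rwa [mul_inv_apply_apply, mul_inv_apply_apply] at hinv

end ShiftIndex

section Blocks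

variable {n r : ℕ} {lam : ℤ → ℕ}

theorem pos_of_mem_LambdaSet (hr : 0 < r) (hlam : lam ∈ LambdaSet n r) : 0 < n := by
  refine Nat.pos_of_ne_zero ?_
  rintro rfl
  exact hr.ne hlam.2

theorem bnd_add_mul (hn : 0 < n) (m k : ℤ) : bnd n r lam (m + n * k) = bnd n r lam m + r * k := by
  have hn' : (n : ℤ) ≠ 0 := by exact_mod_cast hn.ne'
  rw [bnd, add_sub_right_comm, Int.add_mul_ediv_left _ _ hn', Int.add_mul_emod_self_left, bnd]
  ring

theorem bnd_of_mem_Icc {i : ℤ} (hi : i ∈ Set.Icc 1 (n : ℤ)) :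
    bnd n r lam i = ∑ t ∈ Finset.Icc 1 i, (lam t : ℤ) := by
  have h0 : 0 ≤ i - 1 := sub_nonneg.2 hi.1
  have hn : i - 1 < n := Int.sub_one_lt_iff.2 hi.2
  rw [bnd, Int.ediv_eq_zero_of_lt h0 hn, Int.emod_eq_of_lt h0 hn, zero_mul, zero_add,
    sub_add_cancel]

theorem bnd_zero (hr : 0 < r) (hlam : lam ∈ LambdaSet n r) : bnd n r lam 0 = 0 := by
  have hn := pos_of_mem_LambdaSet hr hlam
  have hshift := bnd_add_mul (r := r) (lam := lam) hn 0 1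
  rw [zero_add, mul_one, mul_one, bnd_of_mem_Icc ⟨by exact_mod_cast hn, le_rfl⟩,
    ← Nat.cast_sum, hlam.2] at hshift
  omega

theorem bnd_mul (hr : 0 < r) (hlam : lam ∈ LambdaSet n r) (c : ℤ) :
    bnd n r lam (n * c) = r * c := by
  rw [← zero_add (n * c : ℤ), bnd_add_mul (pos_of_mem_LambdaSet hr hlam), bnd_zero hr hlam,
    zero_add]

theorem bnd_eq_mul_add_sum (hr : 0 < r) (hlam : lam ∈ LambdaSet n r) (m : ℤ) :
    bnd n r lam m = m / n * r + ∑ t ∈ Finset.Icc 1 (m % n), (lam t : ℤ) := by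
  have hn := pos_of_mem_LambdaSet hr hlam
  have hn' : (0 : ℤ) < n := by exact_mod_cast hn
  have hmod : bnd n r lam (m % n) = ∑ t ∈ Finset.Icc 1 (m % n), (lam t : ℤ) := by
    rcases (Int.emod_nonneg m hn'.ne').eq_or_lt with h | h
    · rw [← h, bnd_zero hr hlam]
      rfl
    · exact bnd_of_mem_Icc ⟨h, (Int.emod_lt_of_pos m hn').le⟩
  have hshift := bnd_add_mul (r := r) (lam := lam) hn (m % n) (m / n)
  rw [Int.emod_add_mul_ediv, hmod] at hshift
  rw [hshift]
  ring

theorem bnd_monotone (hr : 0 < r) (hlam : lam ∈ LambdaSet n r) : Monotone (bnd n r lam) := by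
  refine monotone_int_of_le_succ fun m => ?_
  rw [bnd_eq_mul_add_sum hr hlam m, bnd, add_sub_cancel_right]
  gcongr
  exact (lt_add_one _).le

theorem Rset_eq_Ioc (hr : 0 < r) (hlam : lam ∈ LambdaSet n r) (m : ℤ) :
    Rset n r lam m = Set.Ioc (bnd n r lam (m - 1)) (bnd n r lam m) := by
  rw [bnd_eq_mul_add_sum hr hlam (m - 1)]
  rfl

theorem finite_Rset (hr : 0 < r) (hlam : lam ∈ LambdaSet n r) (m : ℤ) :
    (Rset n r lam m).Finite :=
  Rset_eq_Ioc hr hlam m ▸ Set.finite_Ioc _ _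

/-- The index `m` of the block `R^λ_m` containing an integer, as the lower adjoint of `bnd`. -/
noncomputable def blockIndex (n r : ℕ) (lam : ℤ → ℕ) (a : ℤ) : ℤ :=
  sInf {k | a ≤ bnd n r lam k}

theorem gc_blockIndex_bnd (hr : 0 < r) (hlam : lam ∈ LambdaSet n r) :
    GaloisConnection (blockIndex n r lam) (bnd n r lam) := by
  intro a k
  have hr' : (1 : ℤ) ≤ r := by exact_mod_cast hr
  have hne : {k | a ≤ bnd n r lam k}.Nonempty := by
    refine ⟨n * |a|, ?_⟩
    rw [Set.mem_ofPred_eq, bnd_mul hr hlam]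
    exact (le_abs_self a).trans (le_mul_of_one_le_left (abs_nonneg a) hr')
  have hbdd : BddBelow {k | a ≤ bnd n r lam k} := by
    refine ⟨n * (-|a| - 1), fun k (hk : a ≤ bnd n r lam k) => le_of_not_gt fun hlt => ?_⟩
    have hle := hk.trans (bnd_monotone hr hlam hlt.le)
    rw [bnd_mul hr hlam] at hle
    nlinarith [neg_abs_le a, abs_nonneg a]
  exact ⟨fun h => le_trans (Int.csInf_mem hne hbdd) (bnd_monotone hr hlam h),
    fun h => csInf_le hbdd h⟩

theorem blockIndex_monotone (hr : 0 < r) (hlam : lam ∈ LambdaSet n r) :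
    Monotone (blockIndex n r lam) :=
  (gc_blockIndex_bnd hr hlam).monotone_l

theorem Rset_eq_preimage_blockIndex (hr : 0 < r) (hlam : lam ∈ LambdaSet n r) (m : ℤ) :
    Rset n r lam m = blockIndex n r lam ⁻¹' {m} := by
  have hgc := gc_blockIndex_bnd hr hlam
  ext a
  rw [Rset_eq_Ioc hr hlam, Set.mem_Ioc, ← hgc.lt_iff_lt, ← hgc.le_iff_le, Set.mem_preimage,
    Set.mem_singleton_iff]
  omega

theorem mem_Rset_blockIndex (hr : 0 < r) (hlam : lam ∈ LambdaSet n r) (a : ℤ) :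
    a ∈ Rset n r lam (blockIndex n r lam a) := by
  rw [Rset_eq_preimage_blockIndex hr hlam]
  rfl

theorem blockIndex_eq_of_mem_Rset (hr : 0 < r) (hlam : lam ∈ LambdaSet n r) {m a : ℤ}
    (ha : a ∈ Rset n r lam m) : blockIndex n r lam a = m := by
  rwa [Rset_eq_preimage_blockIndex hr hlam] at ha

theorem blockIndex_add_mul (hr : 0 < r) (hlam : lam ∈ LambdaSet n r) (a c : ℤ) :
    blockIndex n r lam (a + r * c) = blockIndex n r lam a + n * c := by
  have hgc := gc_blockIndex_bnd hr hlam
  refine eq_of_forall_ge_iff fun k => ?_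
  have hshift := bnd_add_mul (r := r) (lam := lam) (pos_of_mem_LambdaSet hr hlam) (k - n * c) c
  rw [sub_add_cancel] at hshift
  rw [hgc.le_iff_le, hshift, ← le_sub_iff_add_le (b := (n : ℤ) * c), hgc.le_iff_le]
  exact add_le_add_iff_right _

end Blocks

section DistinguishedRepresentatives

variable {n r : ℕ} {lam : ℤ → ℕ} {p : ℤ}

theorem not_dvd_of_blockIndex_eq (hr : 0 < r) (hlam : lam ∈ LambdaSet n r)
    (h : blockIndex n r lam p = blockIndex n r lam (p + 1)) : ¬(r : ℤ) ∣ p := by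
  have hgc := gc_blockIndex_bnd hr hlam
  rintro ⟨c, rfl⟩
  have hbnd := bnd_mul hr hlam c
  have hle : blockIndex n r lam (r * c) ≤ n * c := (hgc _ _).2 hbnd.ge
  have hlt : n * c < blockIndex n r lam (r * c + 1) := hgc.lt_iff_lt.2 (hbnd ▸ lt_add_one _)
  omega

theorem not_dvd_one_of_blockIndex_eq (hr : 0 < r) (hlam : lam ∈ LambdaSet n r)
    (h : blockIndex n r lam p = blockIndex n r lam (p + 1)) : ¬(r : ℤ) ∣ 1 :=
  fun hd => not_dvd_of_blockIndex_eq hr hlam h (hd.trans (one_dvd p))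

theorem blockIndex_tPerm_adj (hr : 0 < r) (hlam : lam ∈ LambdaSet n r)
    (h : blockIndex n r lam p = blockIndex n r lam (p + 1)) (k : ℤ) :
    blockIndex n r lam (tPerm r p (p + 1) k) = blockIndex n r lam k := by
  rcases tPerm_apply_eq_or r p (p + 1) k with hk | ⟨⟨c, hc⟩, hk⟩ | ⟨⟨c, hc⟩, hk⟩
  · rw [hk]
  · obtain rfl : k = p + r * c := by linarith
    rw [hk, show p + r * c + (p + 1 - p) = p + 1 + r * c by ring,
      blockIndex_add_mul hr hlam, blockIndex_add_mul hr hlam, h]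
  · obtain rfl : k = p + 1 + r * c := by linarith
    rw [hk, show p + 1 + r * c - (p + 1 - p) = p + r * c by ring,
      blockIndex_add_mul hr hlam, blockIndex_add_mul hr hlam, h]

theorem tPerm_adj_mem_SymFin (hr : 0 < r) (hp : ¬(r : ℤ) ∣ p) :
    tPerm r p (p + 1) ∈ SymFin r := by
  have hr' : (0 : ℤ) < r := by exact_mod_cast hr
  have htrans := tPerm_add_of_dvd (dvd_mul_right (r : ℤ) (p / r)) (p % r) (p % r + 1)
  rw [add_right_comm, Int.emod_add_mul_ediv] at htrans
  have hpos : 0 < p % r := Int.emod_pos_of_not_dvd hp |>.resolve_left hr'.ne'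
  exact htrans ▸ Subgroup.subset_closure ⟨p % r, hpos, Int.emod_lt_of_pos p hr', rfl⟩

theorem tPerm_adj_mem_YoungSet (hr : 0 < r) (hlam : lam ∈ LambdaSet n r)
    (h : blockIndex n r lam p = blockIndex n r lam (p + 1)) :
    tPerm r p (p + 1) ∈ YoungSet n r lam := by
  refine ⟨tPerm_adj_mem_SymFin hr (not_dvd_of_blockIndex_eq hr hlam h), fun i _ _ => ?_⟩
  have hcomp : blockIndex n r lam ∘ tPerm r p (p + 1) = blockIndex n r lam :=
    funext (blockIndex_tPerm_adj hr hlam h)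
  have hinv := tPerm_involutive r p (p + 1)
  rw [Rset_eq_preimage_blockIndex hr hlam, Set.image_eq_preimage_of_inverse hinv hinv,
    ← Set.preimage_comp, hcomp]

theorem inv_apply_lt_inv_apply_add_one_of_mem_DRep (hr : 0 < r) (hlam : lam ∈ LambdaSet n r)
    {d : Equiv.Perm ℤ} (hd : d ∈ DRep n r lam)
    (h : blockIndex n r lam p = blockIndex n r lam (p + 1)) : d⁻¹ p < d⁻¹ (p + 1) := by
  refine inv_apply_lt_inv_apply_of_alen_lt hr hd.1 (lt_add_one p) ?_
  rw [hd.2 _ (tPerm_adj_mem_YoungSet hr hlam h)]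
  refine lt_add_of_pos_left _ (alen_tPerm_pos hr (lt_add_one p) ?_)
  rw [add_sub_cancel_left]
  exact not_dvd_one_of_blockIndex_eq hr hlam h

theorem strictMonoOn_inv_Rset_of_mem_DRep (hr : 0 < r) (hlam : lam ∈ LambdaSet n r)
    {d : Equiv.Perm ℤ} (hd : d ∈ DRep n r lam) (m : ℤ) :
    StrictMonoOn (d⁻¹ : Equiv.Perm ℤ) (Rset n r lam m) := by
  refine strictMonoOn_of_lt_add_one (Rset_eq_Ioc hr hlam m ▸ Set.ordConnected_Ioc)
    fun p _ hp hp1 => inv_apply_lt_inv_apply_add_one_of_mem_DRep hr hlam hd ?_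
  rw [blockIndex_eq_of_mem_Rset hr hlam hp, blockIndex_eq_of_mem_Rset hr hlam hp1]

end DistinguishedRepresentatives

section SigmaOrd

theorem sigmaOrd_transpose_of_lt (A : ℤ → ℤ → ℕ) {i j : ℤ} (hij : i < j) :
    sigmaOrd (fun k l => A l k) i j = sigmaOrd A j i := by
  rw [sigmaOrd, sigmaOrd, if_pos hij, if_neg hij.not_gt,
    ← finsum_comp_equiv (Equiv.prodComm ℤ ℤ)]
  simp only [Equiv.prodComm_apply, Prod.fst_swap, Prod.snd_swap, and_comm]

end SigmaOrd

section JMat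

variable {n r : ℕ} {lam mu : ℤ → ℕ} {y d : Equiv.Perm ℤ}

theorem JMat_inv (n r : ℕ) (lam mu : ℤ → ℕ) (d : Equiv.Perm ℤ) (k l : ℤ) :
    JMat n r mu lam d⁻¹ l k = JMat n r lam mu d k l := by
  have himage : d '' (Rset n r mu l ∩ (d⁻¹ : Equiv.Perm ℤ) '' Rset n r lam k) =
      Rset n r lam k ∩ d '' Rset n r mu l := by
    rw [Set.image_inter d.injective, ← Set.image_comp, ← Equiv.Perm.coe_mul, mul_inv_cancel,
      Equiv.Perm.coe_one, Set.image_id, Set.inter_comm]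
  rw [JMat, JMat, ← himage, Set.ncard_image_of_injective _ d.injective]

theorem JMat_eq_ncard_inter_preimage (hr : 0 < r) (hmu : mu ∈ LambdaSet n r)
    (lam : ℤ → ℕ) (d : Equiv.Perm ℤ) (k l : ℤ) :
    JMat n r lam mu d k l =
      (Rset n r lam k ∩ (fun b => blockIndex n r mu (d⁻¹ b)) ⁻¹' {l}).ncard := by
  rw [JMat, Rset_eq_preimage_blockIndex hr hmu, d.image_eq_preimage_symm]
  rfl

theorem roM_JMat (hr : 0 < r) (hlam : lam ∈ LambdaSet n r) (hmu : mu ∈ LambdaSet n r)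
    (d : Equiv.Perm ℤ) (k : ℤ) : roM (JMat n r lam mu d) k = (Rset n r lam k).ncard := by
  have hcount := finsum_mem_ncard_inter_preimage_singleton
    (fun b => blockIndex n r mu (d⁻¹ b)) (Rset n r lam k) Set.univ
    ((finite_Rset hr hlam k).inter_of_left _)
  rw [finsum_mem_univ, Set.preimage_univ, Set.inter_univ] at hcount
  rw [← hcount, roM]
  exact finsum_congr (JMat_eq_ncard_inter_preimage hr hmu lam d k)

theorem coM_JMat (hr : 0 < r) (hlam : lam ∈ LambdaSet n r) (hmu : mu ∈ LambdaSet n r)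
    (d : Equiv.Perm ℤ) (l : ℤ) : coM (JMat n r lam mu d) l = (Rset n r mu l).ncard := by
  rw [← roM_JMat hr hmu hlam d⁻¹]
  exact finsum_congr fun k => (JMat_inv n r lam mu d k l).symm

theorem sigmaOrd_JMat_of_lt (hr : 0 < r) (hlam : lam ∈ LambdaSet n r)
    (hmu : mu ∈ LambdaSet n r) (hd : d ∈ AffSym r) {i j : ℤ} (hij : i < j) :
    sigmaOrd (JMat n r lam mu d) i j =
      (Set.Iic (bnd n r lam i) ∩ d '' Set.Ioi (bnd n r mu (j - 1))).ncard := by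
  let F : ℤ → ℤ × ℤ := fun b => (blockIndex n r lam b, blockIndex n r mu (d⁻¹ b))
  have hcorner : F ⁻¹' {p | p.1 ≤ i ∧ j ≤ p.2} =
      Set.Iic (bnd n r lam i) ∩ d '' Set.Ioi (bnd n r mu (j - 1)) := by
    ext b
    rw [d.image_eq_preimage_symm]
    change blockIndex n r lam b ≤ i ∧ j ≤ blockIndex n r mu (d⁻¹ b) ↔
      b ≤ bnd n r lam i ∧ bnd n r mu (j - 1) < d⁻¹ b
    rw [(gc_blockIndex_bnd hr hlam).le_iff_le, ← (gc_blockIndex_bnd hr hmu).lt_iff_lt,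
      Int.sub_one_lt_iff]
  have hfiber (p : ℤ × ℤ) : JMat n r lam mu d p.1 p.2 = (Set.univ ∩ F ⁻¹' {p}).ncard := by
    rw [JMat_eq_ncard_inter_preimage hr hmu, Rset_eq_preimage_blockIndex hr hlam, Set.univ_inter,
      ← Set.singleton_prod_singleton (a := p.1), Set.mk_preimage_prod]
  have hfin := AffSym.finite_Iic_inter_image_Ioi hr hd (bnd n r lam i) (bnd n r mu (j - 1))
  rw [← hcorner, ← Set.univ_inter (F ⁻¹' _)] at hfin ⊢
  rw [← finsum_mem_ncard_inter_preimage_singleton F _ _ hfin, sigmaOrd, if_pos hij]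
  simp only [hfiber, Set.mem_ofPred_eq]

theorem sigmaOrd_JMat_le_of_lt (hr : 0 < r) (hlam : lam ∈ LambdaSet n r)
    (hmu : mu ∈ LambdaSet n r) (hy : y ∈ AffSym r) (hd : d ∈ AffSym r)
    (h : Relation.ReflTransGen (ReflectionStep r) y d) {i j : ℤ} (hij : i < j) :
    sigmaOrd (JMat n r lam mu y) i j ≤ sigmaOrd (JMat n r lam mu d) i j := by
  rw [sigmaOrd_JMat_of_lt hr hlam hmu hy hij, sigmaOrd_JMat_of_lt hr hlam hmu hd hij]
  exact ncard_Iic_inter_image_Ioi_le_of_reflTransGen hr h hy _ _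

theorem sigmaOrd_JMat_le (hr : 0 < r) (hlam : lam ∈ LambdaSet n r)
    (hmu : mu ∈ LambdaSet n r) (hy : y ∈ AffSym r) (hd : d ∈ AffSym r)
    (h : Relation.ReflTransGen (ReflectionStep r) y d) {i j : ℤ} (hij : i ≠ j) :
    sigmaOrd (JMat n r lam mu y) i j ≤ sigmaOrd (JMat n r lam mu d) i j := by
  rcases hij.lt_or_gt with hij | hji
  · exact sigmaOrd_JMat_le_of_lt hr hlam hmu hy hd h hij
  -- The lower triangular inequalities are the upper triangular ones for `y⁻¹` and `d⁻¹`.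
  · have hinv := sigmaOrd_JMat_le_of_lt hr hmu hlam (inv_mem hy) (inv_mem hd)
      (reflTransGen_reflectionStep_inv h hy) hji
    rw [← sigmaOrd_transpose_of_lt _ hji, ← sigmaOrd_transpose_of_lt _ hji]
    simpa only [← JMat_inv n r lam mu] using hinv

theorem blockIndex_comp_eq_of_JMat_eq (hr : 0 < r) (hlam : lam ∈ LambdaSet n r)
    (hmu : mu ∈ LambdaSet n r) (hy : y⁻¹ ∈ DRep n r mu) (hd : d⁻¹ ∈ DRep n r mu)
    (h : JMat n r lam mu y = JMat n r lam mu d) (a : ℤ) :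
    blockIndex n r lam (y a) = blockIndex n r lam (d a) := by
  have hmono {w : Equiv.Perm ℤ} (hw : w⁻¹ ∈ DRep n r mu) (l : ℤ) :
      MonotoneOn (fun a => blockIndex n r lam (w⁻¹⁻¹ a)) (Rset n r mu l) :=
    (blockIndex_monotone hr hlam).comp_monotoneOn
      (strictMonoOn_inv_Rset_of_mem_DRep hr hmu hw l).monotoneOn
  refine eqOn_of_monotoneOn_of_ncard_fiber_eq (finite_Rset hr hmu _) (hmono hy _) (hmono hd _)
    (fun k => ?_) (mem_Rset_blockIndex hr hmu a)
  rw [← JMat_eq_ncard_inter_preimage hr hlam, ← JMat_eq_ncard_inter_preimage hr hlam, JMat_inv,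
    JMat_inv, h]

theorem eq_of_blockIndex_comp_eq (hr : 0 < r) (hlam : lam ∈ LambdaSet n r)
    (hy : y ∈ DRep n r lam) (hd : d ∈ DRep n r lam)
    (h : ∀ a, blockIndex n r lam (y a) = blockIndex n r lam (d a)) : y = d := by
  have himage (w : Equiv.Perm ℤ) (k : ℤ) :
      (w⁻¹ : Equiv.Perm ℤ) '' Rset n r lam k = (fun a => blockIndex n r lam (w a)) ⁻¹' {k} := by
    rw [Rset_eq_preimage_blockIndex hr hlam]
    exact w.symm.image_eq_preimage_symm _
  refine inv_injective (Equiv.ext fun b => ?_)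
  refine eqOn_of_strictMonoOn_of_image_eq (finite_Rset hr hlam _)
    (strictMonoOn_inv_Rset_of_mem_DRep hr hlam hy _)
    (strictMonoOn_inv_Rset_of_mem_DRep hr hlam hd _) ?_ (mem_Rset_blockIndex hr hlam b)
  rw [himage, himage, funext h]

theorem JMat_injOn (hr : 0 < r) (hlam : lam ∈ LambdaSet n r) (hmu : mu ∈ LambdaSet n r) :
    Set.InjOn (JMat n r lam mu) (DRep2 n r lam mu) := fun _ hy _ hd h =>
  eq_of_blockIndex_comp_eq hr hlam hy.1 hd.1
    (blockIndex_comp_eq_of_JMat_eq hr hlam hmu hy.2 hd.2 h)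

end JMat

/-- if `y, d ∈ D^Δ_{λ,μ}` with `y ≤ d` in the Bruhat order and `y ≠ d`,
then `B = J_Δ(λ,y,μ)` and `A = J_Δ(λ,d,μ)` satisfy `B ⊏ A`: `B ⊑ A` and `B ≠ A`. -/
theorem JMat_sq_lt_of_bruhat_lt (n r : ℕ) (hn : 1 ≤ n) (hr : 1 ≤ r)
    (lam mu : ℤ → ℕ) (hlam : lam ∈ LambdaSet n r) (hmu : mu ∈ LambdaSet n r)
    (y d : Equiv.Perm ℤ) (hy : y ∈ DRep2 n r lam mu) (hd : d ∈ DRep2 n r lam mu)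
    (hle : abruhatLE r y d) (hne : y ≠ d) :
    ((∀ i j : ℤ, i ≠ j →
      sigmaOrd (JMat n r lam mu y) i j ≤ sigmaOrd (JMat n r lam mu d) i j) ∧
    roM (JMat n r lam mu y) = roM (JMat n r lam mu d) ∧
    coM (JMat n r lam mu y) = coM (JMat n r lam mu d)) ∧
    JMat n r lam mu y ≠ JMat n r lam mu d := by
  have hsteps := reflTransGen_reflectionStep_of_abruhatLE hr hle
  refine ⟨⟨fun i j hij => sigmaOrd_JMat_le hr hlam hmu hy.1.1 hd.1.1 hsteps hij,
    funext fun k => ?_, funext fun l => ?_⟩, fun h => hne (JMat_injOn hr hlam hmu hy hd h)⟩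
  · rw [roM_JMat hr hlam hmu, roM_JMat hr hlam hmu]
  · rw [coM_JMat hr hlam hmu, coM_JMat hr hlam hmu]
end

section
/- Let λ, μ ∈ Λ_Δ(n,r), d ∈ D^Δ_{λ,μ}, A = (a_{i,j}) = J_Δ(λ,d,μ), and let d^+ be the unique element of maximal length in the double coset 𝔖_λ d 𝔖_μ. Then ℓ(d^+) = d_A + ℓ(w_{0,μ}), where d_A = Σ a_{i,j} a_{k,l}, the (finite) sum being over all i, j, k, l ∈ ℤ with 1 ≤ i ≤ n, k ≤ i and j < l, and w_{0,μ} is the longest element of 𝔖_μ. -/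
open scoped Classical

/-!
The length on `AffSym r` counts inversions modulo simultaneous translation by `r`. If `w` is longest
in its double coset, then `w` reverses every `μ`-block and `w⁻¹` reverses every `λ`-block, since an
ascent inside a block could be turned into a descent by a simple reflection of the Young subgroup.
Hence the inversions of `w` are of two kinds. The pairs inside one `μ`-block are exactly the
inversions of the longest element of the Young subgroup of `μ`. The pairs in different `μ`-blocks
are those whose images lie in weakly reversed `λ`-blocks; sorting them by the four blocks involved,
and translating the image of the first point into `{1, …, r}`, gives the sum defining `d_A`. The
matrix `A` does not change along the double coset, so it may be computed at `w` instead of `d`.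
-/

namespace AffineSymmetric

open Set

section Preliminaries

theorem isMaxOn_of_forall_ne_lt {α β : Type*} [Preorder β] {f : α → β} {s : Set α} {a : α}
    (h : ∀ x ∈ s, x ≠ a → f x < f a) : IsMaxOn f s a := fun x hx => by
  rcases eq_or_ne x a with rfl | hne
  · exact le_rfl
  · exact (h x hx hne).le

theorem ncard_preimage_eq_finsum {α β : Type*} {f : α → β} {t : Set β}
    (hfin : (f ⁻¹' t).Finite) : (f ⁻¹' t).ncard = ∑ᶠ b ∈ t, (f ⁻¹' {b}).ncard := by
  have hsubset : f '' (f ⁻¹' t) ⊆ t := image_preimage_subset f t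
  have hcover : f ⁻¹' t = ⋃ b ∈ f '' (f ⁻¹' t), f ⁻¹' {b} := by
    rw [biUnion_preimage_singleton]
    exact (subset_preimage_image f _).antisymm (preimage_mono hsubset)
  have hdisj : (f '' (f ⁻¹' t)).PairwiseDisjoint fun b => f ⁻¹' {b} :=
    pairwiseDisjoint_fiber f _
  conv_lhs => rw [hcover]
  rw [(hfin.image f).ncard_biUnion
    (fun b hb => hfin.subset (preimage_mono (singleton_subset_iff.2 (hsubset hb)))) hdisj]
  refine finsum_mem_inter_support_eq' _ _ _ fun b hb => ⟨fun h => hsubset h, fun h => ?_⟩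
  obtain ⟨a, rfl⟩ := nonempty_of_ncard_ne_zero hb
  exact ⟨a, h, rfl⟩

end Preliminaries

section Shift

variable {X Y : Type*} [AddAction ℤ X] [AddAction ℤ Y] {r : ℕ}

/-- Sets that are unions of orbits of the translations by multiples of `r`. Throughout, `ℤ` acts on
`ℤ` by translation and on `ℤ × ℤ` diagonally. -/
def ShiftInvariant (r : ℕ) (S : Set X) : Prop :=
  ∀ (k : ℤ) (x : X), (k * r) +ᵥ x ∈ S ↔ x ∈ S

/-- Maps that commute with the translations by multiples of `r`; `AffSym r` consists of the
permutations of `ℤ` with this property, see `shiftEquivariant_of_mem_AffSym`. -/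
def ShiftEquivariant (r : ℕ) (f : X → Y) : Prop :=
  ∀ (k : ℤ) (x : X), f ((k * r) +ᵥ x) = (k * r) +ᵥ f x

theorem ShiftEquivariant.comp {Z : Type*} [AddAction ℤ Z] {g : Y → Z} {f : X → Y}
    (hg : ShiftEquivariant r g) (hf : ShiftEquivariant r f) : ShiftEquivariant r (g ∘ f) :=
  fun k x => by rw [Function.comp_apply, hf, hg, Function.comp_apply]

theorem ShiftInvariant.preimage {S : Set Y} (hS : ShiftInvariant r S) {f : X → Y}
    (hf : ShiftEquivariant r f) : ShiftInvariant r (f ⁻¹' S) := fun k x => by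
  rw [mem_preimage, hf, hS, mem_preimage]

/-- The translate of `x` by a multiple of `r` on which the shift-equivariant function `f` takes a
value in the fundamental domain `{1, …, r}`. -/
noncomputable def moveToWindow (hr : 0 < r) (f : X → ℤ) (x : X) : X :=
  (-toIocDiv (Nat.cast_pos.2 hr : (0 : ℤ) < r) 0 (f x) * r) +ᵥ x

theorem apply_moveToWindow_mem (hr : 0 < r) {f : X → ℤ} (hf : ShiftEquivariant r f) (x : X) :
    f (moveToWindow hr f x) ∈ Ioc 0 (r : ℤ) := by
  have h := sub_toIocDiv_zsmul_mem_Ioc (Nat.cast_pos.2 hr : (0 : ℤ) < r) 0 (f x)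
  rw [zero_add, smul_eq_mul] at h
  rwa [moveToWindow, hf, vadd_eq_add, neg_mul, neg_add_eq_sub]

theorem moveToWindow_moveToWindow (hr : 0 < r) {f g : X → ℤ} (hf : ShiftEquivariant r f) {x : X}
    (hx : f x ∈ Ioc 0 (r : ℤ)) : moveToWindow hr f (moveToWindow hr g x) = x := by
  have hr' : (0 : ℤ) < r := Nat.cast_pos.2 hr
  have hdiv : toIocDiv hr' 0 (f x) = 0 := (toIocDiv_eq_iff hr').2 (by simpa using hx)
  have hshift (k : ℤ) : toIocDiv hr' 0 (k * r + f x) = k := by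
    simpa [hdiv] using toIocDiv_zsmul_add hr' 0 (f x) k
  simp only [moveToWindow, hf _ x, vadd_eq_add, hshift, vadd_vadd]
  simp

theorem ShiftInvariant.bijOn_moveToWindow {S : Set X} (hS : ShiftInvariant r S) (hr : 0 < r)
    {f g : X → ℤ} (hf : ShiftEquivariant r f) (hg : ShiftEquivariant r g) :
    BijOn (moveToWindow hr g) (S ∩ f ⁻¹' Ioc 0 r) (S ∩ g ⁻¹' Ioc 0 r) :=
  InvOn.bijOn (f' := moveToWindow hr f)
    ⟨fun _ hx => moveToWindow_moveToWindow hr hf hx.2,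
      fun _ hx => moveToWindow_moveToWindow hr hg hx.2⟩
    (fun x hx => ⟨(hS _ x).2 hx.1, apply_moveToWindow_mem hr hg x⟩)
    (fun x hx => ⟨(hS _ x).2 hx.1, apply_moveToWindow_mem hr hf x⟩)

theorem finsum_mem_window_eq {M : Type*} [AddCommMonoid M] (hr : 0 < r) {f g : X → ℤ}
    (hf : ShiftEquivariant r f) (hg : ShiftEquivariant r g) {h : X → M}
    (hh : ∀ (k : ℤ) (x : X), h ((k * r) +ᵥ x) = h x) :
    ∑ᶠ x ∈ f ⁻¹' Ioc 0 (r : ℤ), h x = ∑ᶠ x ∈ g ⁻¹' Ioc 0 (r : ℤ), h x := by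
  have huniv : ShiftInvariant r (univ : Set X) := fun _ _ => Iff.rfl
  refine finsum_mem_eq_of_bijOn (moveToWindow hr g) ?_ fun x _ => (hh _ x).symm
  simpa only [univ_inter] using huniv.bijOn_moveToWindow hr hf hg

end Shift

section OrbitCount

variable {r : ℕ} {S T : Set (ℤ × ℤ)}

/-- The pairs in `S` whose first coordinate lies in the fundamental domain `{1, …, r}`. For a
shift-invariant `S` they represent the orbits of the translations by multiples of `r` on `S`. -/
def orbitReps (r : ℕ) (S : Set (ℤ × ℤ)) : Set (ℤ × ℤ) :=
  S ∩ Prod.fst ⁻¹' Ioc 0 (r : ℤ)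

/-- The number of orbits of the translations by multiples of `r` on a shift-invariant set of pairs
(`0` if there are infinitely many). -/
noncomputable def orbitCount (r : ℕ) (S : Set (ℤ × ℤ)) : ℕ :=
  (orbitReps r S).ncard

theorem shiftEquivariant_fst : ShiftEquivariant r (Prod.fst : ℤ × ℤ → ℤ) :=
  fun _ _ => rfl

theorem ShiftInvariant.orbitCount_eq_ncard (hS : ShiftInvariant r S) (hr : 0 < r)
    {f : ℤ × ℤ → ℤ} (hf : ShiftEquivariant r f) :
    orbitCount r S = (S ∩ f ⁻¹' Ioc 0 (r : ℤ)).ncard :=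
  (hS.bijOn_moveToWindow hr shiftEquivariant_fst hf).ncard_eq

theorem ShiftInvariant.orbitReps_finite_iff (hS : ShiftInvariant r S) (hr : 0 < r)
    {f : ℤ × ℤ → ℤ} (hf : ShiftEquivariant r f) :
    (orbitReps r S).Finite ↔ (S ∩ f ⁻¹' Ioc 0 (r : ℤ)).Finite :=
  (hS.bijOn_moveToWindow hr shiftEquivariant_fst hf).finite_iff_finite

theorem ShiftInvariant.orbitCount_preimage (hS : ShiftInvariant r S) (hr : 0 < r)
    {e : Equiv.Perm (ℤ × ℤ)} (he : ShiftEquivariant r e) :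
    orbitCount r (e ⁻¹' S) = orbitCount r S := by
  rw [(hS.preimage he).orbitCount_eq_ncard hr (shiftEquivariant_fst.comp he)]
  exact ncard_preimage_of_injective_subset_range (s := orbitReps r S) e.injective
    (by simp [e.surjective.range_eq])

theorem orbitReps_union : orbitReps r (S ∪ T) = orbitReps r S ∪ orbitReps r T :=
  union_inter_distrib_right ..

theorem orbitCount_union (hdisj : Disjoint S T) (hfin : (orbitReps r (S ∪ T)).Finite) :
    orbitCount r (S ∪ T) = orbitCount r S + orbitCount r T := by
  rw [orbitReps_union, finite_union] at hfin
  rw [orbitCount, orbitReps_union]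
  exact ncard_union_eq (hdisj.mono inter_subset_left inter_subset_left) hfin.1 hfin.2

theorem orbitCount_orbit (hr : 0 < r) (p : ℤ × ℤ) :
    orbitCount r (range fun k : ℤ => (k * r : ℤ) +ᵥ p) = 1 := by
  obtain ⟨k, hk, huniq⟩ :=
    existsUnique_add_zsmul_mem_Ioc (Nat.cast_pos.2 hr : (0 : ℤ) < r) p.1 0
  simp only [zero_add, smul_eq_mul, add_comm p.1] at hk huniq
  rw [orbitCount, ncard_eq_one]
  refine ⟨(k * r : ℤ) +ᵥ p, Subset.antisymm ?_ (singleton_subset_iff.2 ⟨⟨k, rfl⟩, hk⟩)⟩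
  rintro _ ⟨⟨m, rfl⟩, hm⟩
  rw [huniq m hm, mem_singleton_iff]

end OrbitCount

section AffSym

variable {r : ℕ} {w : Equiv.Perm ℤ}

theorem shiftEquivariant_of_mem_AffSym (hw : w ∈ AffSym r) : ShiftEquivariant r w := by
  have hw' : ∀ i : ℤ, w (i + r) = w i + r := hw
  intro k a
  simp only [vadd_eq_add]
  induction k using Int.induction_on with
  | zero => simp
  | succ k ih =>
    linarith [hw' (k * r + a), congrArg w (show k * r + a + r = (k + 1) * r + a by ring)]
  | pred k ih =>
    linarith [hw' ((-k - 1) * r + a), congrArg w (show (-k - 1) * r + a + r = -k * r + a by ring)]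

theorem apply_shift (hw : w ∈ AffSym r) (k a : ℤ) : w (k * r + a) = k * r + w a :=
  shiftEquivariant_of_mem_AffSym hw k a

theorem shiftEquivariant_prodCongr (hw : w ∈ AffSym r) :
    ShiftEquivariant r (Equiv.prodCongr w w) := fun k p => by
  simp [Prod.ext_iff, apply_shift hw]

theorem exists_displacement_bound (hr : 0 < r) (hw : w ∈ AffSym r) :
    ∃ C : ℤ, ∀ a, |w a - a| ≤ C := by
  refine ⟨∑ i ∈ Finset.Ioc (0 : ℤ) r, |w i - i|, fun a => ?_⟩
  have hmem := apply_moveToWindow_mem (f := id) hr (fun _ _ => rfl) a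
  calc |w a - a| = |w (moveToWindow hr id a) - moveToWindow hr id a| := by
        simp only [moveToWindow, vadd_eq_add, apply_shift hw, add_sub_add_left_eq_sub]
    _ ≤ _ := Finset.single_le_sum (f := fun i => |w i - i|) (fun _ _ => abs_nonneg _)
        (Finset.mem_Ioc.2 hmem)

theorem orbitReps_finite_of_subset (hr : 0 < r) (hw : w ∈ AffSym r) {S : Set (ℤ × ℤ)} {c : ℤ}
    (hS : ∀ p ∈ S, p.1 < p.2 ∧ w p.2 ≤ w p.1 + c) : (orbitReps r S).Finite := by
  obtain ⟨C, hC⟩ := exists_displacement_bound hr hw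
  refine ((finite_Icc (0 : ℤ) r).prod (finite_Icc (0 : ℤ) (r + c + 2 * C))).subset ?_
  rintro ⟨a, b⟩ ⟨hab, ha⟩
  obtain ⟨hlt, hle⟩ := hS _ hab
  have hCa := abs_le.1 (hC a)
  have hCb := abs_le.1 (hC b)
  simp only [mem_preimage, mem_Ioc, mem_prod, mem_Icc] at *
  lia

theorem strictMono_of_apply_lt_apply_succ (hr : 0 < r) (hw : w ∈ AffSym r)
    (h : ∀ i ∈ Ioc 0 (r : ℤ), w i < w (i + 1)) : StrictMono w := by
  refine strictMono_int_of_lt_succ fun a => ?_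
  have hlt := h _ (apply_moveToWindow_mem (f := id) hr (fun _ _ => rfl) a)
  simpa only [moveToWindow, id_eq, vadd_eq_add, add_assoc, apply_shift hw,
    add_lt_add_iff_left] using hlt

end AffSym

section Inversions

variable {r : ℕ} {w : Equiv.Perm ℤ}

/-- The inversions of a permutation of `ℤ`. -/
def inversions (w : Equiv.Perm ℤ) : Set (ℤ × ℤ) :=
  {p | p.1 < p.2 ∧ w p.2 < w p.1}

/-- The number of inversions of `w ∈ AffSym r` modulo simultaneous translation by `r`; it agrees
with the Coxeter length, see `alen_eq_invCount`. -/
noncomputable def invCount (r : ℕ) (w : Equiv.Perm ℤ) : ℕ :=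
  orbitCount r (inversions w)

theorem shiftInvariant_inversions (hw : w ∈ AffSym r) : ShiftInvariant r (inversions w) :=
  fun k p => by simp [inversions, apply_shift hw]

theorem orbitReps_inversions_finite (hr : 0 < r) (hw : w ∈ AffSym r) :
    (orbitReps r (inversions w)).Finite :=
  orbitReps_finite_of_subset (c := 0) hr hw fun _ hp => ⟨hp.1, by simpa using hp.2.le⟩

theorem invCount_inv (hr : 0 < r) (hw : w ∈ AffSym r) : invCount r w⁻¹ = invCount r w := by
  let e : Equiv.Perm (ℤ × ℤ) := (Equiv.prodCongr w w).trans (Equiv.prodComm ℤ ℤ)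
  have he : ShiftEquivariant r e := fun k p => by simp [e, Prod.ext_iff, apply_shift hw]
  have hpre : e ⁻¹' inversions w⁻¹ = inversions w := by
    ext p; simp [e, inversions, and_comm]
  rw [invCount, ← (shiftInvariant_inversions (inv_mem hw)).orbitCount_preimage hr he, hpre,
    invCount]

theorem invCount_of_strictMono (r : ℕ) (h : StrictMono w) : invCount r w = 0 := by
  have hempty : inversions w = ∅ :=
    eq_empty_of_forall_notMem fun _ hp => (h hp.1).not_gt hp.2
  simp [invCount, orbitCount, orbitReps, hempty]

end Inversions

section SimpleReflection

variable {r : ℕ} {w : Equiv.Perm ℤ} {i : ℤ}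

/-- The generator `s_i`, extended to all `i : ℤ` by `s_{i+r} = s_i`. For `r = 1` it is the
identity. -/
def simpleReflection (r : ℕ) (i : ℤ) : Equiv.Perm ℤ :=
  tPerm r i (i + 1)

theorem simpleReflection_one (i : ℤ) : simpleReflection 1 i = 1 := by
  simp [simpleReflection, tPerm]

theorem coe_simpleReflection (hr : r ≠ 1) (i : ℤ) :
    ⇑(simpleReflection r i) = tFun r i (i + 1) := by
  have h : ¬(r : ℤ) ∣ i + 1 - i := by simpa [Int.natCast_dvd] using hr
  simp only [simpleReflection, tPerm, dif_neg h, Function.Involutive.coe_toPerm]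

theorem simpleReflection_apply_left (hr : r ≠ 1) (i : ℤ) : simpleReflection r i i = i + 1 := by
  simp [coe_simpleReflection hr, tFun]

theorem simpleReflection_apply_right (hr : r ≠ 1) (i : ℤ) : simpleReflection r i (i + 1) = i := by
  simp [coe_simpleReflection hr, tFun, Int.natCast_dvd, hr]

theorem simpleReflection_apply_cases (r : ℕ) (i a : ℤ) :
    (∃ k : ℤ, a = k * r + i ∧ simpleReflection r i a = a + 1) ∨
      (∃ k : ℤ, a = k * r + (i + 1) ∧ simpleReflection r i a = a - 1) ∨
        simpleReflection r i a = a := by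
  rcases eq_or_ne r 1 with rfl | hr
  · simp [simpleReflection_one]
  · simp only [coe_simpleReflection hr, tFun]
    split_ifs with h h'
    · obtain ⟨k, hk⟩ := h
      exact Or.inl ⟨k, by lia, by ring⟩
    · obtain ⟨k, hk⟩ := h'
      exact Or.inr (Or.inl ⟨k, by lia, by ring⟩)
    · exact Or.inr (Or.inr rfl)

theorem simpleReflection_shift (r : ℕ) (k i : ℤ) :
    simpleReflection r (k * r + i) = simpleReflection r i := by
  rcases eq_or_ne r 1 with rfl | hr
  · simp [simpleReflection_one]
  · ext a
    simp only [coe_simpleReflection hr, tFun]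
    have hdvd (j : ℤ) : (r : ℤ) ∣ a - (k * r + j) ↔ (r : ℤ) ∣ a - j := by
      rw [← sub_sub, sub_right_comm, dvd_sub_left (Dvd.intro_left k rfl)]
    simp only [add_assoc, hdvd]
    split_ifs <;> ring

theorem simpleReflection_mem_AffSym (r : ℕ) (i : ℤ) : simpleReflection r i ∈ AffSym r := by
  rcases eq_or_ne r 1 with rfl | hr
  · rw [simpleReflection_one]; exact one_mem _
  · intro a
    simp only [coe_simpleReflection hr, tFun, add_sub_right_comm, dvd_add_self_right]
    split_ifs <;> ring

theorem simpleReflection_mul_self (r : ℕ) (i : ℤ) :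
    simpleReflection r i * simpleReflection r i = 1 := by
  unfold simpleReflection tPerm
  split_ifs with h
  · exact one_mul 1
  · ext a
    exact tFun_invol r i (i + 1) h a

theorem simpleReflection_apply_apply (r : ℕ) (i a : ℤ) :
    simpleReflection r i (simpleReflection r i a) = a :=
  Equiv.congr_fun (simpleReflection_mul_self r i) a

/-- The pairs `(i + kr, i + 1 + kr)`, that is, the inversions of `s_i` when `r ≠ 1`. -/
def simplePairs (r : ℕ) (i : ℤ) : Set (ℤ × ℤ) :=
  range fun k : ℤ => (k * r : ℤ) +ᵥ (i, i + 1)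

theorem simpleReflection_lt_simpleReflection {a b : ℤ} (hab : a < b)
    (h : (a, b) ∉ simplePairs r i) : simpleReflection r i a < simpleReflection r i b := by
  have hne : simpleReflection r i a ≠ simpleReflection r i b :=
    (simpleReflection r i).injective.ne hab.ne
  have hadj (k : ℤ) (ha : a = k * r + i) : b ≠ a + 1 := fun hb =>
    h ⟨k, by simp [ha, hb, add_assoc]⟩
  rcases simpleReflection_apply_cases r i a with ⟨k, hk, ha⟩ | ⟨k, hk, ha⟩ | ha <;>
    rcases simpleReflection_apply_cases r i b with ⟨m, hm, hb⟩ | ⟨m, hm, hb⟩ | hb <;>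
    rw [ha, hb] at hne ⊢ <;> grind

theorem inversions_mul_simpleReflection (hr : r ≠ 1) (hw : w ∈ AffSym r) (hi : w i < w (i + 1)) :
    inversions (w * simpleReflection r i) =
      Equiv.prodCongr (simpleReflection r i) (simpleReflection r i) ⁻¹' inversions w ∪
        simplePairs r i := by
  have hs := simpleReflection_mem_AffSym r i
  have hpairs : simplePairs r i ⊆ inversions (w * simpleReflection r i) := by
    rintro _ ⟨k, rfl⟩
    simp [inversions, apply_shift hs, apply_shift hw, simpleReflection_apply_left hr,
      simpleReflection_apply_right hr, hi]
  have hnot {a b : ℤ} (h : w b < w a) : (a, b) ∉ simplePairs r i := by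
    rintro ⟨k, hk⟩
    simp only [Prod.ext_iff, Prod.vadd_mk, vadd_eq_add] at hk
    rw [← hk.1, ← hk.2, apply_shift hw, apply_shift hw] at h
    lia
  refine Subset.antisymm (fun ⟨a, b⟩ ⟨hab, hwab⟩ => ?_) (union_subset ?_ hpairs)
  · by_cases hmem : (a, b) ∈ simplePairs r i
    · exact Or.inr hmem
    · exact Or.inl ⟨simpleReflection_lt_simpleReflection hab hmem, hwab⟩
  · rintro ⟨a, b⟩ ⟨hab, hwab⟩
    have := simpleReflection_lt_simpleReflection hab (hnot hwab)
    exact ⟨by simpa [simpleReflection_apply_apply] using this, hwab⟩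

theorem disjoint_preimage_inversions_simplePairs (hr : r ≠ 1) (w : Equiv.Perm ℤ) (i : ℤ) :
    Disjoint (Equiv.prodCongr (simpleReflection r i) (simpleReflection r i) ⁻¹' inversions w)
      (simplePairs r i) := by
  refine disjoint_right.2 ?_
  rintro _ ⟨k, rfl⟩ ⟨hlt, -⟩
  simp [apply_shift (simpleReflection_mem_AffSym r i), simpleReflection_apply_left hr,
    simpleReflection_apply_right hr] at hlt

theorem invCount_mul_simpleReflection_of_lt (hr : 2 ≤ r) (hw : w ∈ AffSym r)
    (hi : w i < w (i + 1)) : invCount r (w * simpleReflection r i) = invCount r w + 1 := by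
  have hs := simpleReflection_mem_AffSym r i
  have hfin := orbitReps_inversions_finite (by lia) (mul_mem hw hs)
  rw [inversions_mul_simpleReflection (by lia) hw hi] at hfin
  rw [invCount, inversions_mul_simpleReflection (by lia) hw hi,
    orbitCount_union (disjoint_preimage_inversions_simplePairs (by lia) w i) hfin,
    (shiftInvariant_inversions hw).orbitCount_preimage (by lia) (shiftEquivariant_prodCongr hs),
    simplePairs, orbitCount_orbit (by lia), invCount]

theorem two_le_of_apply_succ_lt (hr : 0 < r) (hw : w ∈ AffSym r) (hi : w (i + 1) < w i) :
    2 ≤ r := by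
  by_contra hlt
  obtain rfl : r = 1 := by lia
  have := hw i
  push_cast at this
  lia

theorem invCount_mul_simpleReflection_of_gt (hr : 0 < r) (hw : w ∈ AffSym r)
    (hi : w (i + 1) < w i) : invCount r (w * simpleReflection r i) + 1 = invCount r w := by
  have hr2 := two_le_of_apply_succ_lt hr hw hi
  have hasc : (w * simpleReflection r i) i < (w * simpleReflection r i) (i + 1) := by
    simpa [simpleReflection_apply_left (show r ≠ 1 by lia),
      simpleReflection_apply_right (show r ≠ 1 by lia)] using hi
  rw [← invCount_mul_simpleReflection_of_lt hr2
    (mul_mem hw (simpleReflection_mem_AffSym r i)) hasc, mul_assoc, simpleReflection_mul_self,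
    mul_one]

theorem invCount_mul_simpleReflection_le (hr : 0 < r) (hw : w ∈ AffSym r) (i : ℤ) :
    invCount r (w * simpleReflection r i) ≤ invCount r w + 1 := by
  rcases (w.injective.ne (lt_add_one i).ne).lt_or_gt with h | h
  · obtain rfl | hr2 : r = 1 ∨ 2 ≤ r := by lia
    · simp [simpleReflection_one]
    · exact (invCount_mul_simpleReflection_of_lt hr2 hw h).le
  · have := invCount_mul_simpleReflection_of_gt hr hw h
    lia

end SimpleReflection

section Displacement

variable {r : ℕ} {u v x : Equiv.Perm ℤ}

/-- The total displacement of `w` over the fundamental domain `{1, …, r}`. It is additive on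
`AffSym r`, and its quotient by `r` is `shiftIdx r w`. -/
noncomputable def displacement (r : ℕ) (w : Equiv.Perm ℤ) : ℤ :=
  ∑ i ∈ Finset.Icc (1 : ℤ) r, (w i - i)

theorem displacement_eq_finsum (r : ℕ) (w : Equiv.Perm ℤ) :
    displacement r w = ∑ᶠ a ∈ id ⁻¹' Ioc 0 (r : ℤ), (w a - a) := by
  rw [displacement, preimage_id, ← finsum_mem_coe_finset, Finset.coe_Icc]
  rfl

theorem displacement_mul (hr : 0 < r) (hu : u ∈ AffSym r) (hv : v ∈ AffSym r) :
    displacement r (u * v) = displacement r u + displacement r v := by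
  have hfin : (id ⁻¹' Ioc 0 (r : ℤ)).Finite := finite_Ioc ..
  have hreindex : ∑ᶠ a ∈ id ⁻¹' Ioc 0 (r : ℤ), (u (v a) - v a) = displacement r u :=
    calc ∑ᶠ a ∈ id ⁻¹' Ioc 0 (r : ℤ), (u (v a) - v a)
      _ = ∑ᶠ a ∈ v ⁻¹' Ioc 0 (r : ℤ), (u (v a) - v a) :=
        finsum_mem_window_eq hr (fun _ _ => rfl) (shiftEquivariant_of_mem_AffSym hv)
          fun k a => by simp [apply_shift hv, apply_shift hu]
      _ = ∑ᶠ b ∈ Ioc 0 (r : ℤ), (u b - b) :=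
        finsum_mem_eq_of_bijOn v (v.bijOn fun _ => Iff.rfl) fun _ _ => rfl
      _ = displacement r u := (displacement_eq_finsum r u).symm
  rw [← hreindex, displacement_eq_finsum, displacement_eq_finsum, ← finsum_mem_add_distrib hfin]
  exact finsum_mem_congr rfl fun a _ => (sub_add_sub_cancel _ _ _).symm

theorem displacement_one (r : ℕ) : displacement r 1 = 0 := by
  simp [displacement]

theorem displacement_simpleReflection (hr : 0 < r) (i : ℤ) :
    displacement r (simpleReflection r i) = 0 := by
  have hs := simpleReflection_mem_AffSym r i
  have h := displacement_mul hr hs hs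
  rw [simpleReflection_mul_self, displacement_one] at h
  lia

theorem rhoP_zpow_apply (k a : ℤ) : (rhoP ^ k) a = a + k := by
  simp [rhoP]

theorem rhoP_zpow_mem_AffSym (r : ℕ) (k : ℤ) : rhoP ^ k ∈ AffSym r := fun a => by
  simp only [rhoP_zpow_apply, add_right_comm]

theorem displacement_rhoP_zpow (r : ℕ) (k : ℤ) : displacement r (rhoP ^ k) = r * k := by
  simp [displacement, rhoP_zpow_apply]

theorem eq_rhoP_zpow_of_strictMono {w : Equiv.Perm ℤ} (hw : StrictMono w) :
    w = rhoP ^ w 0 := by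
  have hsucc (a : ℤ) : w (a + 1) = w a + 1 :=
    (hw.orderIsoOfSurjective w w.surjective).map_succ a
  ext a
  rw [rhoP_zpow_apply]
  induction a using Int.induction_on with
  | zero => rw [zero_add]
  | succ a ih => rw [hsucc, ih, add_right_comm]
  | pred a ih =>
    have h := hsucc (-a - 1)
    rw [sub_add_cancel] at h
    lia

theorem WGrp_le_AffSym (r : ℕ) : WGrp r ≤ AffSym r := by
  rw [WGrp, Subgroup.closure_le]
  rintro _ ⟨i, -, -, rfl⟩
  exact simpleReflection_mem_AffSym r i

theorem displacement_of_mem_WGrp (hr : 0 < r) (hx : x ∈ WGrp r) : displacement r x = 0 := by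
  induction hx using Subgroup.closure_induction with
  | mem s hs =>
    obtain ⟨i, -, -, rfl⟩ := hs
    exact displacement_simpleReflection hr i
  | one => exact displacement_one r
  | mul y z hy hz ihy ihz =>
    rw [displacement_mul hr (WGrp_le_AffSym r hy) (WGrp_le_AffSym r hz), ihy, ihz, add_zero]
  | inv y hy ih =>
    have hy := WGrp_le_AffSym r hy
    have h := displacement_mul hr (inv_mem hy) hy
    rwa [inv_mul_cancel, displacement_one, ih, add_zero, eq_comm] at h

theorem shiftIdx_rhoP_zpow_mul (hr : 0 < r) (k : ℤ) (hx : x ∈ WGrp r) :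
    shiftIdx r (rhoP ^ k * x) = k := by
  change displacement r _ / r = k
  rw [displacement_mul hr (rhoP_zpow_mem_AffSym r k) (WGrp_le_AffSym r hx),
    displacement_rhoP_zpow, displacement_of_mem_WGrp hr hx, add_zero]
  exact Int.mul_ediv_cancel_left k (by positivity)

end Displacement

section Length

variable {r : ℕ} {w : Equiv.Perm ℤ}

theorem invCount_rhoP_zpow_mul (r : ℕ) (k : ℤ) (w : Equiv.Perm ℤ) :
    invCount r (rhoP ^ k * w) = invCount r w := by
  simp [invCount, inversions, rhoP_zpow_apply]

theorem exists_reduced_word (hr : 0 < r) (hw : w ∈ AffSym r) :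
    ∃ (k : ℤ) (l : List (Equiv.Perm ℤ)),
      l.length = invCount r w ∧ (∀ s ∈ l, s ∈ sGen r) ∧ w = rhoP ^ k * l.prod := by
  induction hm : invCount r w using Nat.strong_induction_on generalizing w with
  | h m ih =>
    by_cases hmono : StrictMono w
    · refine ⟨w 0, [], ?_, by simp, by simpa using eq_rhoP_zpow_of_strictMono hmono⟩
      rw [← hm, invCount_of_strictMono r hmono, List.length_nil]
    · obtain ⟨i, hi, hwi⟩ : ∃ i ∈ Ioc 0 (r : ℤ), w (i + 1) ≤ w i := by
        by_contra! h
        exact hmono (strictMono_of_apply_lt_apply_succ hr hw h)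
      have hdesc := hwi.lt_of_ne (w.injective.ne (lt_add_one i).ne')
      have hcount := invCount_mul_simpleReflection_of_gt hr hw hdesc
      have hw' := mul_mem hw (simpleReflection_mem_AffSym r i)
      obtain ⟨k, l, hlen, hl, heq⟩ := ih _ (by lia) hw' rfl
      refine ⟨k, l ++ [simpleReflection r i], by simp; lia, ?_, ?_⟩
      · intro s hs
        rcases List.mem_append.1 hs with hs | hs
        · exact hl s hs
        · exact ⟨i, hi.1, hi.2, List.mem_singleton.1 hs⟩
      · rw [List.prod_append, List.prod_singleton, ← mul_assoc, ← heq, mul_assoc,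
          simpleReflection_mul_self, mul_one]

theorem invCount_mul_list_prod_le (hr : 0 < r) {l : List (Equiv.Perm ℤ)}
    (hl : ∀ s ∈ l, s ∈ sGen r) (hw : w ∈ AffSym r) :
    invCount r (w * l.prod) ≤ invCount r w + l.length := by
  induction l generalizing w with
  | nil => simp
  | cons s l ih =>
    obtain ⟨⟨i, -, -, rfl⟩, hl'⟩ := List.forall_mem_cons.1 hl
    have hle := ih hl' (mul_mem hw (simpleReflection_mem_AffSym r i))
    have hs := invCount_mul_simpleReflection_le hr hw i
    rw [mul_assoc] at hle
    simp only [List.prod_cons, List.length_cons]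
    exact hle.trans (by lia)

theorem alen_eq_invCount (hr : 0 < r) (hw : w ∈ AffSym r) : alen r w = invCount r w := by
  obtain ⟨k, l, hlen, hl, rfl⟩ := exists_reduced_word hr hw
  have hmem : l.prod ∈ WGrp r := list_prod_mem fun s hs => Subgroup.subset_closure (hl s hs)
  rw [alen, shiftIdx_rhoP_zpow_mul hr k hmem, inv_mul_cancel_left]
  refine le_antisymm (Nat.sInf_le ⟨l, hlen, hl, rfl⟩) (le_csInf ⟨_, l, rfl, hl, rfl⟩ ?_)
  rintro _ ⟨l', rfl, hl', hprod⟩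
  have hle := invCount_mul_list_prod_le hr hl' (one_mem (AffSym r))
  rwa [one_mul, hprod, invCount_of_strictMono r (w := 1) strictMono_id, zero_add,
    ← invCount_rhoP_zpow_mul r k] at hle

end Length

section Blocks

variable {n r : ℕ} {lam : ℤ → ℕ}

theorem pos_of_mem_LambdaSet (hr : 0 < r) (hlam : lam ∈ LambdaSet n r) : 0 < n := by
  rcases Nat.eq_zero_or_pos n with rfl | hn
  · have h : 0 = r := by simpa using hlam.2
    exact absurd h hr.ne
  · exact hn

theorem bnd_mul_add (hr : 0 < r) (hlam : lam ∈ LambdaSet n r) (k : ℤ) {j : ℤ} (hj : 0 ≤ j)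
    (hjn : j ≤ n) : bnd n r lam (k * n + j) = k * r + ∑ t ∈ Finset.Icc 1 j, (lam t : ℤ) := by
  have hn : (0 : ℤ) < n := Nat.cast_pos.2 (pos_of_mem_LambdaSet hr hlam)
  have hpos (k : ℤ) {j : ℤ} (hj : 0 < j) (hjn : j ≤ n) :
      bnd n r lam (k * n + j) = k * r + ∑ t ∈ Finset.Icc 1 j, (lam t : ℤ) := by
    have hdecomp : k * n + j - 1 = j - 1 + k * n := by ring
    rw [bnd, hdecomp, Int.add_mul_ediv_right _ _ hn.ne', Int.add_mul_emod_self_right,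
      Int.ediv_eq_zero_of_lt (by lia) (by lia), Int.emod_eq_of_lt (by lia) (by lia), zero_add,
      sub_add_cancel]
  rcases hj.eq_or_lt with rfl | hj
  · have hsum : ∑ t ∈ Finset.Icc (1 : ℤ) n, (lam t : ℤ) = r := by
      exact_mod_cast hlam.2
    have h := hpos (k - 1) hn le_rfl
    rw [show (k - 1) * n + n = k * n + 0 by ring, hsum] at h
    rw [h, Finset.Icc_eq_empty (by lia), Finset.sum_empty]
    ring
  · exact hpos k hj hjn

theorem bnd_shift (hr : 0 < r) (hlam : lam ∈ LambdaSet n r) (k m : ℤ) :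
    bnd n r lam (k * n + m) = k * r + bnd n r lam m := by
  have hn : (0 : ℤ) < n := Nat.cast_pos.2 (pos_of_mem_LambdaSet hr hlam)
  have hnonneg := Int.emod_nonneg m hn.ne'
  have hle := (Int.emod_lt_of_pos m hn).le
  have hm : m = m / n * n + m % n := by rw [mul_comm, Int.mul_ediv_add_emod]
  rw [hm, ← add_assoc, ← add_mul, bnd_mul_add hr hlam _ hnonneg hle,
    bnd_mul_add hr hlam _ hnonneg hle]
  ring

theorem bnd_mul (hr : 0 < r) (hlam : lam ∈ LambdaSet n r) (k : ℤ) :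
    bnd n r lam (k * n) = k * r := by
  simpa using bnd_mul_add hr hlam k le_rfl (Nat.cast_nonneg n)

theorem Rset_eq_Ioc (hr : 0 < r) (hlam : lam ∈ LambdaSet n r) (m : ℤ) :
    Rset n r lam m = Ioc (bnd n r lam (m - 1)) (bnd n r lam m) := by
  have hn : (0 : ℤ) < n := Nat.cast_pos.2 (pos_of_mem_LambdaSet hr hlam)
  have h := bnd_mul_add hr hlam ((m - 1) / n) (Int.emod_nonneg _ hn.ne')
    (Int.emod_lt_of_pos (m - 1) hn).le
  rw [mul_comm _ (n : ℤ), Int.mul_ediv_add_emod] at h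
  rw [h]
  rfl

theorem bnd_monotone (hr : 0 < r) (hlam : lam ∈ LambdaSet n r) : Monotone (bnd n r lam) := by
  have hn : (0 : ℤ) < n := Nat.cast_pos.2 (pos_of_mem_LambdaSet hr hlam)
  refine monotone_int_of_le_succ fun m => ?_
  have hnonneg := Int.emod_nonneg m hn.ne'
  have hlt := Int.emod_lt_of_pos m hn
  have hm : m = m / n * n + m % n := by rw [mul_comm, Int.mul_ediv_add_emod]
  rw [hm, add_assoc, bnd_mul_add hr hlam _ hnonneg hlt.le,
    bnd_mul_add hr hlam _ (by lia) (by lia)]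
  gcongr
  lia

/-- The index `m` of the block `Rset n r lam m` containing `a`, see `mem_Rset_iff`. As the least `m`
whose upper end `bnd n r lam m` is at least `a`, it is the lower adjoint of `bnd n r lam`. -/
noncomputable def blockIndex (n r : ℕ) (lam : ℤ → ℕ) (a : ℤ) : ℤ :=
  sInf {m | a ≤ bnd n r lam m}

theorem blockIndex_le_iff (hr : 0 < r) (hlam : lam ∈ LambdaSet n r) {a m : ℤ} :
    blockIndex n r lam a ≤ m ↔ a ≤ bnd n r lam m := by
  have hmono := bnd_monotone hr hlam
  have hr' : (1 : ℤ) ≤ r := by exact_mod_cast hr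
  have habs : |a| ≤ |a| * r := le_mul_of_one_le_right (abs_nonneg a) hr'
  have hne : {m | a ≤ bnd n r lam m}.Nonempty := by
    refine ⟨|a| * n, (le_abs_self a).trans ?_⟩
    rwa [bnd_mul hr hlam]
  have hbdd : BddBelow {m | a ≤ bnd n r lam m} := by
    refine ⟨(-|a| - 1) * n, fun m hm => le_of_lt (hmono.reflect_lt ?_)⟩
    rw [bnd_mul hr hlam]
    have := neg_abs_le a
    exact lt_of_lt_of_le (by linarith) hm
  exact ⟨fun h => (Int.csInf_mem hne hbdd).trans (hmono h), fun h => csInf_le hbdd h⟩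

theorem lt_blockIndex_iff (hr : 0 < r) (hlam : lam ∈ LambdaSet n r) {a m : ℤ} :
    m < blockIndex n r lam a ↔ bnd n r lam m < a := by
  rw [← not_le, blockIndex_le_iff hr hlam, not_le]

theorem blockIndex_monotone (hr : 0 < r) (hlam : lam ∈ LambdaSet n r) :
    Monotone (blockIndex n r lam) := fun _ _ hab =>
  (blockIndex_le_iff hr hlam).2 (hab.trans ((blockIndex_le_iff hr hlam).1 le_rfl))

theorem mem_Rset_iff (hr : 0 < r) (hlam : lam ∈ LambdaSet n r) {a m : ℤ} :
    a ∈ Rset n r lam m ↔ blockIndex n r lam a = m := by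
  rw [Rset_eq_Ioc hr hlam, mem_Ioc, ← lt_blockIndex_iff hr hlam, ← blockIndex_le_iff hr hlam]
  lia

theorem blockIndex_shift (hr : 0 < r) (hlam : lam ∈ LambdaSet n r) (k a : ℤ) :
    blockIndex n r lam (k * r + a) = k * n + blockIndex n r lam a := by
  refine eq_of_forall_ge_iff fun m => ?_
  rw [← le_sub_iff_add_le', blockIndex_le_iff hr hlam, blockIndex_le_iff hr hlam,
    show m = k * n + (m - k * n) by ring, bnd_shift hr hlam, add_le_add_iff_left,
    add_sub_cancel_left]

theorem blockIndex_mem_Ioc_iff (hr : 0 < r) (hlam : lam ∈ LambdaSet n r) {a : ℤ} :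
    blockIndex n r lam a ∈ Ioc 0 (n : ℤ) ↔ a ∈ Ioc 0 (r : ℤ) := by
  have h0 : bnd n r lam 0 = 0 := by simpa using bnd_mul hr hlam 0
  have h1 : bnd n r lam n = r := by simpa using bnd_mul hr hlam 1
  rw [mem_Ioc, mem_Ioc, lt_blockIndex_iff hr hlam, blockIndex_le_iff hr hlam, h0, h1]

theorem two_le_of_blockIndex_succ_eq (hr : 0 < r) (hlam : lam ∈ LambdaSet n r) {i : ℤ}
    (hi : blockIndex n r lam (i + 1) = blockIndex n r lam i) : 2 ≤ r := by
  by_contra hlt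
  obtain rfl : r = 1 := by lia
  have hn := pos_of_mem_LambdaSet hr hlam
  have hshift := blockIndex_shift hr hlam 1 i
  simp only [Nat.cast_one, one_mul, add_comm 1 i, hi] at hshift
  lia

end Blocks

section YoungSubgroup

variable {n r : ℕ} {lam : ℤ → ℕ} {w : Equiv.Perm ℤ}

/-- The Young subgroup `YoungSet n r lam`, bundled as a subgroup. -/
def youngSubgroup (n r : ℕ) (lam : ℤ → ℕ) : Subgroup (Equiv.Perm ℤ) where
  carrier := YoungSet n r lam
  one_mem' := ⟨one_mem _, fun _ _ _ => by simp⟩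
  mul_mem' := fun {u v} hu hv => ⟨mul_mem hu.1 hv.1, fun m hm hmn => by
    rw [Equiv.Perm.coe_mul, image_comp, hv.2 m hm hmn, hu.2 m hm hmn]⟩
  inv_mem' := fun {u} hu => ⟨inv_mem hu.1, fun m hm hmn => by
    conv_lhs => rw [← hu.2 m hm hmn, ← image_comp, ← Equiv.Perm.coe_mul, inv_mul_cancel]
    simp⟩

theorem youngSubgroup_le_AffSym (n r : ℕ) (lam : ℤ → ℕ) : youngSubgroup n r lam ≤ AffSym r := by
  have hle : SymFin r ≤ AffSym r := by
    rw [SymFin, Subgroup.closure_le]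
    rintro _ ⟨i, -, -, rfl⟩
    exact simpleReflection_mem_AffSym r i
  exact fun w hw => hle hw.1

theorem blockIndex_apply_of_mem_youngSubgroup (hr : 0 < r) (hlam : lam ∈ LambdaSet n r)
    (hw : w ∈ youngSubgroup n r lam) (a : ℤ) :
    blockIndex n r lam (w a) = blockIndex n r lam a := by
  have hwin {b : ℤ} (hb : b ∈ Ioc 0 (r : ℤ)) :
      blockIndex n r lam (w b) = blockIndex n r lam b := by
    obtain ⟨h0, hn⟩ := (blockIndex_mem_Ioc_iff hr hlam).2 hb
    rw [← mem_Rset_iff hr hlam, ← hw.2 _ h0 hn]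
    exact mem_image_of_mem w ((mem_Rset_iff hr hlam).2 rfl)
  have h := hwin (apply_moveToWindow_mem (f := id) hr (fun _ _ => rfl) a)
  simpa only [moveToWindow, id_eq, vadd_eq_add, apply_shift (youngSubgroup_le_AffSym n r lam hw),
    blockIndex_shift hr hlam, add_right_inj] using h

theorem image_Rset_of_blockIndex_apply (hr : 0 < r) (hlam : lam ∈ LambdaSet n r)
    (hw : ∀ a, blockIndex n r lam (w a) = blockIndex n r lam a) (m : ℤ) :
    w '' Rset n r lam m = Rset n r lam m := by
  ext b
  obtain ⟨a, rfl⟩ := w.surjective b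
  rw [w.injective.mem_set_image, mem_Rset_iff hr hlam, mem_Rset_iff hr hlam, hw]

theorem simpleReflection_mem_youngSubgroup (hr : 0 < r) (hlam : lam ∈ LambdaSet n r) {i : ℤ}
    (hi : blockIndex n r lam (i + 1) = blockIndex n r lam i) :
    simpleReflection r i ∈ youngSubgroup n r lam := by
  refine ⟨?_, fun m _ _ => image_Rset_of_blockIndex_apply hr hlam (fun a => ?_) m⟩
  · have hmem := apply_moveToWindow_mem (f := id) hr (fun _ _ => rfl) i
    have hsucc : moveToWindow hr id i + 1 ∈ Ioc 0 (r : ℤ) := by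
      rw [← blockIndex_mem_Ioc_iff hr hlam] at hmem ⊢
      simpa only [moveToWindow, id_eq, vadd_eq_add, add_assoc, blockIndex_shift hr hlam, hi]
        using hmem
    exact Subgroup.subset_closure
      ⟨_, hmem.1, Int.lt_of_add_one_le hsucc.2, (simpleReflection_shift r _ i).symm⟩
  · rcases simpleReflection_apply_cases r i a with ⟨k, rfl, h⟩ | ⟨k, rfl, h⟩ | h
    · rw [h, add_assoc, blockIndex_shift hr hlam, blockIndex_shift hr hlam, hi]
    · rw [h, ← add_assoc, add_sub_cancel_right, add_assoc, blockIndex_shift hr hlam,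
        blockIndex_shift hr hlam, hi]
    · rw [h]

end YoungSubgroup

section Maximal

variable {n r : ℕ} {lam mu : ℤ → ℕ} {w : Equiv.Perm ℤ}

/-- A block on which `w` is not decreasing has an ascent `w i < w (i + 1)`, and `w * s_i` would be
longer. -/
theorem strictAntiOn_Rset_of_forall_invCount_le (hr : 0 < r) (hmu : mu ∈ LambdaSet n r)
    (hw : w ∈ AffSym r) (hmax : ∀ s ∈ youngSubgroup n r mu, invCount r (w * s) ≤ invCount r w)
    (m : ℤ) :
    StrictAntiOn w (Rset n r mu m) := by
  have hord : (Rset n r mu m).OrdConnected := Rset_eq_Ioc hr hmu m ▸ ordConnected_Ioc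
  refine strictAntiOn_of_add_one_lt hord fun i _ hi hi' => ?_
  have hblock : blockIndex n r mu (i + 1) = blockIndex n r mu i :=
    ((mem_Rset_iff hr hmu).1 hi').trans ((mem_Rset_iff hr hmu).1 hi).symm
  by_contra! hle
  have hasc := hle.lt_of_ne (w.injective.ne (lt_add_one i).ne)
  have hcount :=
    invCount_mul_simpleReflection_of_lt (two_le_of_blockIndex_succ_eq hr hmu hblock) hw hasc
  have := hmax _ (simpleReflection_mem_youngSubgroup hr hmu hblock)
  lia

/-- Pairs `a < b` in the same block. -/
def sameBlockPairs (n r : ℕ) (mu : ℤ → ℕ) : Set (ℤ × ℤ) :=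
  {p | p.1 < p.2 ∧ blockIndex n r mu p.1 = blockIndex n r mu p.2}

/-- Pairs whose `μ`-blocks are strictly ordered and whose images under `w` lie in weakly
reversed `λ`-blocks. -/
def blockInversions (n r : ℕ) (lam mu : ℤ → ℕ) (w : Equiv.Perm ℤ) : Set (ℤ × ℤ) :=
  {p | blockIndex n r mu p.1 < blockIndex n r mu p.2 ∧
    blockIndex n r lam (w p.2) ≤ blockIndex n r lam (w p.1)}

theorem disjoint_blockInversions_sameBlockPairs (n r : ℕ) (lam mu : ℤ → ℕ) (w : Equiv.Perm ℤ) :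
    Disjoint (blockInversions n r lam mu w) (sameBlockPairs n r mu) :=
  disjoint_left.2 fun _ hp hp' => hp.1.ne hp'.2

theorem inversions_eq_union (hr : 0 < r) (hlam : lam ∈ LambdaSet n r) (hmu : mu ∈ LambdaSet n r)
    (hright : ∀ m, StrictAntiOn w (Rset n r mu m))
    (hleft : ∀ m, StrictAntiOn ⇑w⁻¹ (Rset n r lam m)) :
    inversions w = blockInversions n r lam mu w ∪ sameBlockPairs n r mu := by
  have hlammono := blockIndex_monotone hr hlam
  have hmumono := blockIndex_monotone hr hmu
  ext ⟨a, b⟩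
  constructor
  · rintro ⟨hab, hw⟩
    rcases (hmumono hab.le).lt_or_eq with h | h
    · exact Or.inl ⟨h, hlammono hw.le⟩
    · exact Or.inr ⟨hab, h⟩
  · rintro (⟨hmu', hlam'⟩ | ⟨hab, h⟩)
    · have hab : a < b := hmumono.reflect_lt hmu'
      refine ⟨hab, ?_⟩
      rcases hlam'.lt_or_eq with h | h
      · exact hlammono.reflect_lt h
      · have hanti := (hleft _).lt_iff_gt ((mem_Rset_iff hr hlam).2 rfl)
          ((mem_Rset_iff hr hlam).2 h)
        simpa using hanti.1 (by simpa using hab)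
    · exact ⟨hab, hright _ ((mem_Rset_iff hr hmu).2 rfl) ((mem_Rset_iff hr hmu).2 h.symm) hab⟩

theorem inversions_eq_sameBlockPairs (hr : 0 < r) (hmu : mu ∈ LambdaSet n r)
    (hw : w ∈ youngSubgroup n r mu) (hanti : ∀ m, StrictAntiOn w (Rset n r mu m)) :
    inversions w = sameBlockPairs n r mu := by
  have hmono := blockIndex_monotone hr hmu
  ext ⟨a, b⟩
  refine and_congr_right fun hab => ⟨fun hba => ?_, fun h => ?_⟩
  · have hle := hmono hba.le
    simp only [blockIndex_apply_of_mem_youngSubgroup hr hmu hw] at hle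
    exact (hmono hab.le).antisymm hle
  · exact hanti _ ((mem_Rset_iff hr hmu).2 rfl) ((mem_Rset_iff hr hmu).2 h.symm) hab


end Maximal

section Matrix

variable {n r : ℕ} {lam mu : ℤ → ℕ} {w : Equiv.Perm ℤ}

theorem shiftInvariant_blockInversions (hr : 0 < r) (hlam : lam ∈ LambdaSet n r)
    (hmu : mu ∈ LambdaSet n r) (hw : w ∈ AffSym r) :
    ShiftInvariant r (blockInversions n r lam mu w) := fun k p => by
  simp [blockInversions, apply_shift hw, blockIndex_shift hr hlam, blockIndex_shift hr hmu]

theorem lt_add_of_blockIndex_le (hr : 0 < r) (hlam : lam ∈ LambdaSet n r) {a b : ℤ}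
    (h : blockIndex n r lam b ≤ blockIndex n r lam a) : b < a + r := by
  have hn := pos_of_mem_LambdaSet hr hlam
  refine (blockIndex_monotone hr hlam).reflect_lt ?_
  have := blockIndex_shift hr hlam 1 a
  rw [one_mul, one_mul, add_comm] at this
  lia

theorem orbitReps_blockInversions_finite (hr : 0 < r) (hlam : lam ∈ LambdaSet n r)
    (hmu : mu ∈ LambdaSet n r) (hw : w ∈ AffSym r) :
    (orbitReps r (blockInversions n r lam mu w)).Finite :=
  orbitReps_finite_of_subset hr hw fun _ hp =>
    ⟨(blockIndex_monotone hr hmu).reflect_lt hp.1, (lt_add_of_blockIndex_le hr hlam hp.2).le⟩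

theorem ncard_setOf_blockIndex_eq (hr : 0 < r) (hlam : lam ∈ LambdaSet n r)
    (hmu : mu ∈ LambdaSet n r) (w : Equiv.Perm ℤ) (i j : ℤ) :
    {a | blockIndex n r lam (w a) = i ∧ blockIndex n r mu a = j}.ncard = JMat n r lam mu w i j := by
  rw [JMat, ← ncard_image_of_injective _ w.injective]
  congr 1
  ext b
  obtain ⟨a, rfl⟩ := w.surjective b
  rw [mem_inter_iff, w.injective.mem_set_image, w.injective.mem_set_image, mem_Rset_iff hr hlam,
    mem_Rset_iff hr hmu]
  rfl

theorem orbitCount_blockInversions (hr : 0 < r) (hlam : lam ∈ LambdaSet n r)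
    (hmu : mu ∈ LambdaSet n r) (hw : w ∈ AffSym r) :
    orbitCount r (blockInversions n r lam mu w) = dWt n (JMat n r lam mu w) := by
  have hinv := shiftInvariant_blockInversions hr hlam hmu hw
  have hequiv : ShiftEquivariant r (w ∘ Prod.fst : ℤ × ℤ → ℤ) :=
    (shiftEquivariant_of_mem_AffSym hw).comp shiftEquivariant_fst
  let entry (a : ℤ) : ℤ × ℤ := (blockIndex n r lam (w a), blockIndex n r mu a)
  let entries : ℤ × ℤ → (ℤ × ℤ) × ℤ × ℤ := Prod.map entry entry
  let t : Set ((ℤ × ℤ) × ℤ × ℤ) :=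
    {q | 1 ≤ q.1.1 ∧ q.1.1 ≤ (n : ℤ) ∧ q.2.1 ≤ q.1.1 ∧ q.1.2 < q.2.2}
  have hpre : blockInversions n r lam mu w ∩ (w ∘ Prod.fst) ⁻¹' Ioc 0 (r : ℤ) =
      entries ⁻¹' t := by
    ext p
    simp only [mem_inter_iff, mem_preimage, Function.comp_apply,
      ← blockIndex_mem_Ioc_iff hr hlam]
    change (_ < _ ∧ _ ≤ _) ∧ (_ < _ ∧ _ ≤ _) ↔ (_ ≤ _ ∧ _ ≤ _ ∧ _ ≤ _ ∧ _ < _)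
    simp only [entries, entry, Prod.map]
    lia
  have hfin : (entries ⁻¹' t).Finite := by
    rw [← hpre, ← hinv.orbitReps_finite_iff hr hequiv]
    exact orbitReps_blockInversions_finite hr hlam hmu hw
  have hfiber (q : (ℤ × ℤ) × ℤ × ℤ) : (entries ⁻¹' {q}).ncard =
      JMat n r lam mu w q.1.1 q.1.2 * JMat n r lam mu w q.2.1 q.2.2 := by
    rw [← ncard_setOf_blockIndex_eq hr hlam hmu, ← ncard_setOf_blockIndex_eq hr hlam hmu,
      ← ncard_prod]
    congr 1
    ext p
    simp [entries, entry, Prod.ext_iff]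
  rw [hinv.orbitCount_eq_ncard hr hequiv, hpre, ncard_preimage_eq_finsum hfin]
  exact finsum_mem_congr rfl fun q _ => hfiber q

theorem JMat_mul_mul (hr : 0 < r) (hlam : lam ∈ LambdaSet n r) (hmu : mu ∈ LambdaSet n r)
    {u v : Equiv.Perm ℤ} (hu : u ∈ youngSubgroup n r lam) (hv : v ∈ youngSubgroup n r mu)
    (d : Equiv.Perm ℤ) : JMat n r lam mu (u * d * v) = JMat n r lam mu d := by
  have hu' := image_Rset_of_blockIndex_apply hr hlam
    (blockIndex_apply_of_mem_youngSubgroup hr hlam hu)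
  have hv' := image_Rset_of_blockIndex_apply hr hmu
    (blockIndex_apply_of_mem_youngSubgroup hr hmu hv)
  ext k l
  calc JMat n r lam mu (u * d * v) k l
    _ = (u '' Rset n r lam k ∩ u '' (d '' (v '' Rset n r mu l))).ncard := by
      rw [JMat, hu', ← image_comp, ← image_comp]; rfl
    _ = JMat n r lam mu d k l := by
      rw [hv', ← image_inter u.injective, ncard_image_of_injective _ u.injective, JMat]

end Matrix

section DoubleCoset

variable {n r : ℕ} {lam mu : ℤ → ℕ} {d w u v : Equiv.Perm ℤ}

theorem mem_AffSym_of_mem_DCoset (hd : d ∈ AffSym r) (hw : w ∈ DCoset n r lam mu d) :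
    w ∈ AffSym r := by
  obtain ⟨u, hu, v, hv, rfl⟩ := hw
  exact mul_mem (mul_mem (youngSubgroup_le_AffSym n r lam hu) hd)
    (youngSubgroup_le_AffSym n r mu hv)

theorem mul_mul_mem_DCoset (hw : w ∈ DCoset n r lam mu d) (hu : u ∈ youngSubgroup n r lam)
    (hv : v ∈ youngSubgroup n r mu) : u * w * v ∈ DCoset n r lam mu d := by
  obtain ⟨u', hu', v', hv', rfl⟩ := hw
  exact ⟨u * u', mul_mem hu hu', v' * v, mul_mem hv' hv, by simp only [mul_assoc]⟩

theorem JMat_of_mem_DCoset (hr : 0 < r) (hlam : lam ∈ LambdaSet n r) (hmu : mu ∈ LambdaSet n r)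
    (hw : w ∈ DCoset n r lam mu d) : JMat n r lam mu w = JMat n r lam mu d := by
  obtain ⟨u, hu, v, hv, rfl⟩ := hw
  exact JMat_mul_mul hr hlam hmu hu hv d

theorem invCount_mul_mul_le_of_isMaxOn (hr : 0 < r) (hd : d ∈ AffSym r)
    (hw : w ∈ DCoset n r lam mu d) (hmax : IsMaxOn (alen r) (DCoset n r lam mu d) w)
    (hu : u ∈ youngSubgroup n r lam) (hv : v ∈ youngSubgroup n r mu) :
    invCount r (u * w * v) ≤ invCount r w := by
  have hmem := mul_mul_mem_DCoset hw hu hv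
  rw [← alen_eq_invCount hr (mem_AffSym_of_mem_DCoset hd hw),
    ← alen_eq_invCount hr (mem_AffSym_of_mem_DCoset hd hmem)]
  exact hmax hmem

theorem inversions_of_isMaxOn_DCoset (hr : 0 < r) (hlam : lam ∈ LambdaSet n r)
    (hmu : mu ∈ LambdaSet n r) (hd : d ∈ AffSym r) (hw : w ∈ DCoset n r lam mu d)
    (hmax : IsMaxOn (alen r) (DCoset n r lam mu d) w) :
    inversions w = blockInversions n r lam mu w ∪ sameBlockPairs n r mu := by
  have hwA := mem_AffSym_of_mem_DCoset hd hw
  refine inversions_eq_union hr hlam hmu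
    (strictAntiOn_Rset_of_forall_invCount_le hr hmu hwA fun s hs => ?_)
    (strictAntiOn_Rset_of_forall_invCount_le hr hlam (inv_mem hwA) fun s hs => ?_)
  · simpa using invCount_mul_mul_le_of_isMaxOn hr hd hw hmax (one_mem _) hs
  · have hs' := youngSubgroup_le_AffSym n r lam hs
    rw [← invCount_inv hr (mul_mem (inv_mem hwA) hs'), invCount_inv hr hwA]
    simpa using invCount_mul_mul_le_of_isMaxOn hr hd hw hmax (inv_mem hs) (one_mem _)

theorem inversions_of_isMaxOn_YoungSet (hr : 0 < r) (hmu : mu ∈ LambdaSet n r)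
    (hw : w ∈ youngSubgroup n r mu) (hmax : IsMaxOn (alen r) (YoungSet n r mu) w) :
    inversions w = sameBlockPairs n r mu := by
  have hle := youngSubgroup_le_AffSym n r mu
  refine inversions_eq_sameBlockPairs hr hmu hw
    (strictAntiOn_Rset_of_forall_invCount_le hr hmu (hle hw) fun s hs => ?_)
  rw [← alen_eq_invCount hr (hle hw), ← alen_eq_invCount hr (hle (mul_mem hw hs))]
  exact hmax (mul_mem hw hs)

end DoubleCoset

end AffineSymmetric

open AffineSymmetric in
theorem length_longest_double_coset_element_general (n r : ℕ) (hr : 1 ≤ r)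
    (lam mu : ℤ → ℕ) (hlam : lam ∈ LambdaSet n r) (hmu : mu ∈ LambdaSet n r)
    (d : Equiv.Perm ℤ) (hd : d ∈ AffSym r)
    (dplus : Equiv.Perm ℤ) (hdp : dplus ∈ DCoset n r lam mu d)
    (hdmax : IsMaxOn (alen r) (DCoset n r lam mu d) dplus)
    (w0 : Equiv.Perm ℤ) (hw0 : w0 ∈ YoungSet n r mu)
    (hw0max : IsMaxOn (alen r) (YoungSet n r mu) w0) :
    alen r dplus = dWt n (JMat n r lam mu d) + alen r w0 := by
  have hdpA := mem_AffSym_of_mem_DCoset hd hdp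
  have hw0A := youngSubgroup_le_AffSym n r mu hw0
  have hdpinv := inversions_of_isMaxOn_DCoset hr hlam hmu hd hdp hdmax
  have hw0inv := inversions_of_isMaxOn_YoungSet hr hmu hw0 hw0max
  have hfin := orbitReps_inversions_finite hr hdpA
  rw [hdpinv] at hfin
  calc alen r dplus
    _ = orbitCount r (blockInversions n r lam mu dplus ∪ sameBlockPairs n r mu) := by
      rw [alen_eq_invCount hr hdpA, invCount, hdpinv]
    _ = orbitCount r (blockInversions n r lam mu dplus) + orbitCount r (sameBlockPairs n r mu) :=
      orbitCount_union (disjoint_blockInversions_sameBlockPairs n r lam mu dplus) hfin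
    _ = dWt n (JMat n r lam mu d) + alen r w0 := by
      rw [orbitCount_blockInversions hr hlam hmu hdpA, JMat_of_mem_DCoset hr hlam hmu hdp,
        alen_eq_invCount hr hw0A, invCount, hw0inv]

/-- for `d ∈ D^Δ_{λ,μ}`, `A = J_Δ(λ,d,μ)`, `d⁺` the unique longest
element of `𝔖_λ d 𝔖_μ`, and `w_{0,μ}` the longest element of `𝔖_μ`,
one has `ℓ(d⁺) = d_A + ℓ(w_{0,μ})`. -/
theorem length_longest_double_coset_element (n r : ℕ) (hn : 1 ≤ n) (hr : 1 ≤ r)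
    (lam mu : ℤ → ℕ) (hlam : lam ∈ LambdaSet n r) (hmu : mu ∈ LambdaSet n r)
    (d : Equiv.Perm ℤ) (hd : d ∈ DRep2 n r lam mu)
    (dplus : Equiv.Perm ℤ) (hdp : dplus ∈ DCoset n r lam mu d)
    (hdmax : ∀ w ∈ DCoset n r lam mu d, w ≠ dplus → alen r w < alen r dplus)
    (w0 : Equiv.Perm ℤ) (hw0 : w0 ∈ YoungSet n r mu)
    (hw0max : ∀ w ∈ YoungSet n r mu, w ≠ w0 → alen r w < alen r w0) :
    alen r dplus = dWt n (JMat n r lam mu d) + alen r w0 :=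
  length_longest_double_coset_element_general n r hr lam mu hlam hmu d hd.1.1 dplus hdp
    (AffineSymmetric.isMaxOn_of_forall_ne_lt hdmax) w0 hw0
    (AffineSymmetric.isMaxOn_of_forall_ne_lt hw0max)
end
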